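/- For every p ≥ 0, θ(K_{1,1,4p+2,4p+2}) = θ(K_{1,1,4p+3,4p+3}) = p + 2. -/

import Mathlib

open SimpleGraph

/-- A simple graph is planar if it admits a drawing in the plane: an injective
placement of vertices and, for each edge, an injective continuous arc joining
the images of its endpoints, such that arcs avoid vertex images in their
interiors and distinct arcs meet only at vertex images. -/
def IsPlanar {V : Type*} (G : SimpleGraph V) : Prop :=
  ∃ (f : V → ℝ × ℝ) (γ : G.edgeSet → (Set.Icc (0:ℝ) 1 → ℝ × ℝ)),
    Function.Injective f ∧
    (∀ e : G.edgeSet, Continuous (γ e)) ∧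
    (∀ e : G.edgeSet, ∃ u v : V, (e : Sym2 V) = s(u, v) ∧
      γ e ⟨0, by norm_num⟩ = f u ∧ γ e ⟨1, by norm_num⟩ = f v) ∧
    (∀ e : G.edgeSet, Function.Injective (γ e)) ∧
    (∀ e : G.edgeSet, ∀ t : Set.Icc (0:ℝ) 1, (t : ℝ) ≠ 0 → (t : ℝ) ≠ 1 →
      ∀ v : V, γ e t ≠ f v) ∧
    (∀ e e' : G.edgeSet, e ≠ e' → ∀ s t : Set.Icc (0:ℝ) 1,
      γ e s = γ e' t → γ e s ∈ Set.range f)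

/-- The thickness of a graph: the least `n` such that `G` is the union of `n`
planar subgraphs. -/
noncomputable def thickness {V : Type*} (G : SimpleGraph V) : ℕ :=
  sInf {n : ℕ | ∃ H : Fin n → SimpleGraph V,
    (∀ i, H i ≤ G) ∧ (∀ i, IsPlanar (H i)) ∧ (⨆ i, H i) = G}

namespace TK
inductive LE : Type
  | h (i j : ℤ) : LE
  | v (i j : ℤ) : LE
  | d (i j : ℤ) : LE

def ea : LE → ℤ × ℤ
  | .h i j => (i, j)
  | .v i j => (i, j)
  | .d i j => (i + 1, j)
def eb : LE → ℤ × ℤ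
  | .h i j => (i + 1, j)
  | .v i j => (i, j + 1)
  | .d i j => (i, j + 1)

/-- triangles of the lattice -/
abbrev Tri := Bool × ℤ × ℤ
def lt : LE → Tri
  | .h i j => (true, i, j)
  | .v i j => (true, i, j)
  | .d i j => (true, i, j)
def rt : LE → Tri
  | .h i j => (false, i, j - 1)
  | .v i j => (false, i - 1, j)
  | .d i j => (false, i, j)

abbrev F2 := ZMod 2

def bd : (LE → F2) →ₗ[F2] (ℤ × ℤ → F2) where
  toFun z x := z (.h x.1 x.2) + z (.h (x.1 - 1) x.2) + z (.v x.1 x.2) + z (.v x.1 (x.2 - 1))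
    + z (.d (x.1 - 1) x.2) + z (.d x.1 (x.2 - 1))
  map_add' a b := by ext x; simp; ring
  map_smul' a b := by ext x; simp; ring

def dl : (Tri → F2) →ₗ[F2] (LE → F2) where
  toFun g e := g (lt e) + g (rt e)
  map_add' a b := by ext x; simp; ring
  map_smul' a b := by ext x; simp; ring

lemma dl_apply (g : Tri → F2) (e : LE) : dl g e = g (lt e) + g (rt e) := rfl

lemma two0 (a : F2) : a + a = 0 := CharTwo.add_self_eq_zero a

lemma bd_dl (g : Tri → F2) : bd (dl g) = 0 := by
  ext ⟨i, j⟩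
  simp only [bd, dl, LinearMap.coe_mk, AddHom.coe_mk, lt, rt, Pi.zero_apply]
  have h2 : (2 : F2) = 0 := rfl
  linear_combination (g (true, i, j) + g (false, i, j-1) + g (true, i-1, j) + g (false, i-1, j-1)
    + g (false, i-1, j) + g (true, i, j-1)) * h2

lemma eq_of_add {a b : F2} (h : a + b = 0) : a = b := CharTwo.add_eq_zero.mp h

lemma const_int (f : ℤ → F2) (h : ∀ i, f (i - 1) = f i) (i k : ℤ) : f i = f k := by
  have key : ∀ i, f i = f 0 := by
    intro i
    induction i using Int.induction_on with
    | zero => rfl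
    | succ n ih => rw [← h, ← ih]; congr 1; ring
    | pred n ih => rw [h]; exact ih
  rw [key i, key k]

lemma dl_const (g : Tri → F2) (h : dl g = 0) (s t : Tri) : g s = g t := by
  have hh : ∀ i j, g (true, i, j) = g (false, i, j - 1) := fun i j => eq_of_add (congrFun h (.h i j))
  have hv : ∀ i j, g (true, i, j) = g (false, i - 1, j) := fun i j => eq_of_add (congrFun h (.v i j))
  have hd : ∀ i j, g (true, i, j) = g (false, i, j) := fun i j => eq_of_add (congrFun h (.d i j))
  have h1 : ∀ i j k, g (true, i, j) = g (true, k, j) := fun i j k =>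
    const_int (fun i => g (true, i, j)) (fun i => by rw [hd, ← hv]) i k
  have h2 : ∀ i j k, g (true, i, j) = g (true, i, k) := fun i j k =>
    const_int (fun j => g (true, i, j)) (fun j => by rw [hd, ← hh]) j k
  have key : ∀ s : Tri, g s = g (true, 0, 0) := by
    rintro ⟨b, i, j⟩
    cases b
    · rw [← hd, h1 i j 0, h2 0 j 0]
    · rw [h1 i j 0, h2 0 j 0]
  rw [key s, key t]

/-- every finitely supported cycle is a coboundary of triangles -/
lemma exists_dl (H : Finset LE) (z : LE → F2) (hz : ∀ e, e ∉ H → z e = 0) (hb : bd z = 0) :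
    ∃ g : Tri → F2, dl g = z := by
  obtain ⟨M, hM⟩ : ∃ M : ℤ, ∀ e ∈ H, M < (ea e).1 := by
    obtain ⟨M, hM⟩ := (H.image (fun e => (ea e).1)).bddBelow
    refine ⟨M - 1, fun e he => ?_⟩
    have := hM (Finset.mem_coe.2 (Finset.mem_image_of_mem (fun e => (ea e).1) he))
    linarith
  have hz' : ∀ e, (ea e).1 ≤ M → z e = 0 := fun e he => hz e fun h => by
    have := hM e h; omega
  -- D i j
  let D : ℤ → ℤ → F2 := fun i j => ∑ k ∈ Finset.Icc (M-1) i, (z (.v k j) + z (.d k j))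
  have hDs : ∀ i j, D i j = D (i-1) j + (z (.v i j) + z (.d i j)) := by
    intro i j
    by_cases hi : M - 1 ≤ i
    · have : Finset.Icc (M-1) i = insert i (Finset.Icc (M-1) (i-1)) := by
        ext k; simp; omega
      simp only [D]
      rw [this, Finset.sum_insert (by simp), add_comm]
    · have e1 : Finset.Icc (M-1) i = ∅ := Finset.Icc_eq_empty (by omega)
      have e2 : Finset.Icc (M-1) (i-1) = ∅ := Finset.Icc_eq_empty (by omega)
      simp only [D, e1, e2]
      rw [hz' (.v i j) (by simp [ea]; omega), hz' (.d i j) (by simp [ea]; omega)]; simp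
  have hD0 : ∀ i j, i < M - 1 → D i j = 0 := by
    intro i j hi
    simp only [D]
    rw [Finset.Icc_eq_empty (by omega)]; simp
  have h2 : (2 : F2) = 0 := rfl
  have hh : ∀ i j, z (.h i j) + (D i j + z (.d i j)) + D i (j-1) = 0 := by
    intro i j
    have := const_int (fun i => z (.h i j) + (D i j + z (.d i j)) + D i (j-1)) (fun i => by
      have hb' := congrFun hb (i, j)
      simp only [bd, LinearMap.coe_mk, AddHom.coe_mk, Pi.zero_apply] at hb'
      rw [hDs i j, hDs i (j-1)]
      linear_combination hb' - (z (LE.d i j) +z (LE.h i j)+z (LE.v i j)+z (LE.v i (j-1))+z (LE.d i (j-1))) * h2) i (M - 2)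
    rw [this, hD0 _ _ (by omega), hD0 _ _ (by omega), hz' (.h _ j) (by simp [ea]),
      hz' (.d _ j) (by simp [ea])]; simp
  refine ⟨fun t => if t.1 then D t.2.1 t.2.2 + z (.d t.2.1 t.2.2) else D t.2.1 t.2.2, ?_⟩
  ext e
  cases e with
  | h i j =>
    simp only [dl_apply, lt, rt]
    have := hh i j
    simp
    linear_combination this - z (.h i j) * h2
  | v i j =>
    simp only [dl_apply, lt, rt]
    simp
    rw [hDs i j]
    linear_combination (D (i-1) j  + z (.d i j)) * h2
  | d i j =>
    simp only [dl_apply, lt, rt]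
    simp
    linear_combination (D i j) * h2

open Classical in
lemma bd_single (e : LE) (x : ℤ × ℤ) : bd (Pi.single e 1) x =
    (if ea e = x then 1 else 0) + (if eb e = x then 1 else 0) := by
  obtain ⟨i, j⟩ := x
  cases e with
  | h a b =>
    simp only [bd, LinearMap.coe_mk, AddHom.coe_mk, ea, eb, Pi.single_apply, LE.h.injEq, reduceCtorEq, if_false, add_zero, Prod.mk.injEq]
    congr 1 <;> congr 1 <;> simp <;> omega
  | v a b =>
    simp only [bd, LinearMap.coe_mk, AddHom.coe_mk, ea, eb, Pi.single_apply, LE.v.injEq, reduceCtorEq, if_false, add_zero, zero_add, Prod.mk.injEq]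
    congr 1 <;> congr 1 <;> simp <;> omega
  | d a b =>
    simp only [bd, LinearMap.coe_mk, AddHom.coe_mk, ea, eb, Pi.single_apply, LE.d.injEq, reduceCtorEq, if_false, add_zero, zero_add, Prod.mk.injEq]
    congr 1 <;> congr 1 <;> simp <;> omega

open Classical in
lemma eq_sum_single (H : Finset LE) (z : LE → F2) (hz : ∀ e, e ∉ H → z e = 0) :
    z = ∑ e ∈ H, z e • Pi.single e (1 : F2) := by
  ext e
  simp only [Finset.sum_apply, Pi.smul_apply, Pi.single_apply, smul_eq_mul, mul_ite, mul_one, mul_zero]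
  rw [Finset.sum_ite_eq]
  split_ifs with h
  · rfl
  · exact hz e h

open Classical in
lemma sum_bd (H : Finset LE) (z : LE → F2) (hz : ∀ e, e ∉ H → z e = 0) (S : Finset (ℤ × ℤ)) :
    ∑ x ∈ S, bd z x = ∑ e ∈ H, z e * ((if ea e ∈ S then 1 else 0) + (if eb e ∈ S then 1 else 0)) := by
  conv_lhs => rw [eq_sum_single H z hz]
  simp only [map_sum, map_smul, Finset.sum_apply, Pi.smul_apply, smul_eq_mul, bd_single]
  rw [Finset.sum_comm]
  refine Finset.sum_congr rfl fun e _ => ?_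
  rw [← Finset.mul_sum, Finset.sum_add_distrib]
  simp [Finset.sum_ite_eq]

def lAdj (x y : ℤ × ℤ) : Prop := ∃ e, (ea e = x ∧ eb e = y) ∨ (ea e = y ∧ eb e = x)

def LConn (S : Set (ℤ × ℤ)) : Prop :=
  ∀ x ∈ S, ∀ y ∈ S, Relation.ReflTransGen (fun a b => a ∈ S ∧ b ∈ S ∧ lAdj a b) x y

open Classical in
lemma exists_chain (S : Set (ℤ × ℤ)) (x y : ℤ × ℤ)
    (h : Relation.ReflTransGen (fun a b => a ∈ S ∧ b ∈ S ∧ lAdj a b) x y) :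
    ∃ c : LE → F2, (∀ e, c e ≠ 0 → ea e ∈ S ∧ eb e ∈ S) ∧
      bd c = Pi.single x 1 + Pi.single y 1 := by
  induction h with
  | refl => exact ⟨0, by simp, by ext z; simp [two0]⟩
  | @tail b c _ hbc ih =>
    obtain ⟨k, hk, hb⟩ := ih
    obtain ⟨hbS, hcS, e, he⟩ := hbc
    refine ⟨k + Pi.single e 1, ?_, ?_⟩
    · intro e' he'
      by_cases h : e' = e
      · subst h
        rcases he with ⟨h1, h2⟩ | ⟨h1, h2⟩ <;> simp [h1, h2, hbS, hcS]
      · apply hk; simpa [h] using he'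
    · rw [map_add, hb]
      ext z
      simp only [Pi.add_apply, bd_single, Pi.single_apply]
      have h2 : (2 : F2) = 0 := rfl
      rcases he with ⟨h1, h2'⟩ | ⟨h1, h2'⟩ <;> rw [h1, h2'] <;> simp only [eq_comm (a := z)] <;>
      linear_combination (if b = z then (1:F2) else 0) * h2
end TK

namespace TK

section euler
open Classical
variable {V E : Type} [Fintype V] [Fintype E]

noncomputable def gb (tl hd : E → V) : (E → F2) →ₗ[F2] (V → F2) where
  toFun c v := ∑ e, c e * ((if tl e = v then 1 else 0) + (if hd e = v then 1 else 0))
  map_add' a b := by ext x; simp [add_mul, Finset.sum_add_distrib]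
  map_smul' a b := by ext x; simp [mul_assoc, Finset.mul_sum]

lemma gb_apply (tl hd : E → V) (c : E → F2) (v : V) : gb tl hd c v =
    ∑ e, c e * ((if tl e = v then 1 else 0) + (if hd e = v then 1 else 0)) := rfl

lemma exists_other (tl hd : E → V) (hne : ∀ e, tl e ≠ hd e) (c : E → F2) (hc : gb tl hd c = 0)
    (v : V) (e : E) (he : c e ≠ 0) (hv : v = tl e ∨ v = hd e) :
    ∃ e', e' ≠ e ∧ c e' ≠ 0 ∧ (v = tl e' ∨ v = hd e') := by
  by_contra hcon
  push Not at hcon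
  have h := congrFun hc v
  rw [gb_apply, Finset.sum_eq_single e] at h
  · have hn := hne e
    rcases hv with rfl | rfl
    · simp [hn.symm, he] at h
    · simp [hn, he] at h
  · intro e' _ hee'
    by_cases h0 : c e' = 0
    · simp [h0]
    · obtain ⟨h1, h2⟩ := hcon e' hee' h0
      simp [h1.symm, h2.symm]
  · simp

lemma four_le (tl hd : E → V) (col : V → Bool) (hcol : ∀ e, col (tl e) ≠ col (hd e))
    (hs : ∀ e e', s(tl e, hd e) = s(tl e', hd e') → e = e') (c : E → F2) (hc : gb tl hd c = 0)
    (h0 : c ≠ 0) : 4 ≤ (Finset.univ.filter fun e => c e ≠ 0).card := by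
  have hne : ∀ e, tl e ≠ hd e := fun e h => hcol e (by rw [h])
  obtain ⟨e1, h1⟩ := Function.ne_iff.1 h0
  simp only [Pi.zero_apply] at h1
  obtain ⟨e2, h21, h2, hv2⟩ := exists_other tl hd hne c hc (tl e1) e1 h1 (Or.inl rfl)
  obtain ⟨e3, h31, h3, hv3⟩ := exists_other tl hd hne c hc (hd e1) e1 h1 (Or.inr rfl)
  obtain ⟨w, hw, hw2⟩ : ∃ w, s(tl e2, hd e2) = s(tl e1, w) ∧ (w = tl e2 ∨ w = hd e2) := by
    rcases hv2 with h | h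
    · exact ⟨hd e2, by rw [h], Or.inr rfl⟩
    · exact ⟨tl e2, by rw [h, Sym2.eq_swap], Or.inl rfl⟩
  obtain ⟨x, hx, hx2⟩ : ∃ w, s(tl e3, hd e3) = s(w, hd e1) ∧ (w = tl e3 ∨ w = hd e3) := by
    rcases hv3 with h | h
    · exact ⟨hd e3, by rw [h, Sym2.eq_swap], Or.inr rfl⟩
    · exact ⟨tl e3, by rw [h], Or.inl rfl⟩
  have cw : col w = col (hd e1) := by
    have a1 := hcol e1
    have a2 := hcol e2
    rcases Sym2.eq_iff.1 hw with ⟨p, q⟩ | ⟨p, q⟩ <;> rw [p, q] at a2 <;> 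
    revert a1 a2 <;> cases col w <;> cases col (hd e1) <;> cases col (tl e1) <;> simp
  have cx : col x = col (tl e1) := by
    have a1 := hcol e1
    have a2 := hcol e3
    rcases Sym2.eq_iff.1 hx with ⟨p, q⟩ | ⟨p, q⟩ <;> rw [p, q] at a2 <;> 
    revert a1 a2 <;> cases col x <;> cases col (hd e1) <;> cases col (tl e1) <;> simp
  have hwne : w ≠ hd e1 := by
    rintro rfl; exact h21 (hs _ _ hw)
  have hxne : x ≠ tl e1 := by
    rintro rfl; exact h31 (hs _ _ hx)
  have hwt : w ≠ tl e1 := fun h => hcol e1 (by rw [← cw, h])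
  have hwx : w ≠ x := fun h => hcol e1 (by rw [← cw, h, cx])
  have h32 : e3 ≠ e2 := by
    rintro rfl
    rw [hw] at hx
    rcases Sym2.eq_iff.1 hx with ⟨p, q⟩ | ⟨p, q⟩
    · exact hwne q
    · exact hne e1 p
  obtain ⟨e4, h42, h4, hv4⟩ := exists_other tl hd hne c hc w e2 h2 hw2
  have h41 : e4 ≠ e1 := by
    rintro rfl
    rcases hv4 with h | h
    · exact hwt h
    · exact hwne h
  have h43 : e4 ≠ e3 := by
    rintro rfl
    have : w ∈ s(tl e4, hd e4) := by simpa using hv4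
    rw [hx] at this
    simp at this
    rcases this with h | h
    · exact hwx h
    · exact hwne h
  have : ({e1, e2, e3, e4} : Finset E).card = 4 := by
    rw [Finset.card_insert_of_notMem, Finset.card_insert_of_notMem, Finset.card_insert_of_notMem,
      Finset.card_singleton] <;> simp [h21.symm, h31.symm, h41.symm, h32.symm, h42.symm, h43.symm]
  rw [← this]
  apply Finset.card_le_card
  intro e he
  simp at he ⊢
  rcases he with rfl | rfl | rfl | rfl <;> assumption

lemma finrank_gb (tl hd : E → V) (hV : 0 < Fintype.card V) :
    Fintype.card E + 1 ≤ Module.finrank F2 (LinearMap.ker (gb tl hd)) + Fintype.card V := by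
  have h1 := LinearMap.finrank_range_add_finrank_ker (gb tl hd)
  let sm : (V → F2) →ₗ[F2] F2 := ∑ v, LinearMap.proj v
  have hsm : ∀ f, sm f = ∑ v, f v := fun f => by simp [sm]
  have h2 := LinearMap.finrank_range_add_finrank_ker sm
  have h3 : LinearMap.range (gb tl hd) ≤ LinearMap.ker sm := by
    rintro _ ⟨c, rfl⟩
    rw [LinearMap.mem_ker, hsm]
    simp only [gb_apply]
    rw [Finset.sum_comm]
    apply Finset.sum_eq_zero
    intro e _
    rw [← Finset.mul_sum, Finset.sum_add_distrib]
    simp [two0]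
  have h4 := Submodule.finrank_mono h3
  have h5 : LinearMap.range sm = ⊤ := by
    rw [LinearMap.range_eq_top]
    intro a
    obtain ⟨v⟩ := Fintype.card_pos_iff.1 hV
    exact ⟨Pi.single v a, by rw [hsm]; simp⟩
  rw [h5] at h2
  simp at h1 h2
  omega

variable (tl hd : E → V) (U : V → Finset (ℤ × ℤ)) (r : E → LE)

structure Model : Prop where
  ne : ∀ e, tl e ≠ hd e
  simple : ∀ e e', s(tl e, hd e) = s(tl e', hd e') → e = e'
  nonempty : ∀ v, (U v).Nonempty
  conn : ∀ v, LConn (U v : Set (ℤ × ℤ))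
  disj : ∀ u v x, x ∈ U u → x ∈ U v → u = v
  edge : ∀ e, (ea (r e) ∈ U (tl e) ∧ eb (r e) ∈ U (hd e)) ∨
    (ea (r e) ∈ U (hd e) ∧ eb (r e) ∈ U (tl e))

def Inner (e : LE) : Prop := ∃ v, ea e ∈ U v ∧ eb e ∈ U v

variable {tl hd U r}

lemma Model.not_inner (M : Model tl hd U r) (e : E) : ¬ Inner U (r e) := by
  rintro ⟨v, h1, h2⟩
  apply M.ne e
  rcases M.edge e with ⟨h3, h4⟩ | ⟨h3, h4⟩
  · rw [M.disj _ _ _ h3 h1, M.disj _ _ _ h4 h2]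
  · rw [M.disj _ _ _ h3 h1, M.disj _ _ _ h4 h2]

lemma Model.inj (M : Model tl hd U r) : Function.Injective r := by
  intro e e' h
  apply M.simple
  have h1 := M.edge e
  have h2 := M.edge e'
  rw [h] at h1
  rcases h1 with ⟨a, b⟩ | ⟨a, b⟩ <;> rcases h2 with ⟨c, d⟩ | ⟨c, d⟩ <;>
    rw [M.disj _ _ _ a c, M.disj _ _ _ b d]
  · rw [Sym2.eq_swap]
  · rw [Sym2.eq_swap]

lemma Model.inc (M : Model tl hd U r) (e : E) (v : V) :
    ((if ea (r e) ∈ U v then 1 else 0) + (if eb (r e) ∈ U v then 1 else 0) : F2) =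
    (if tl e = v then 1 else 0) + (if hd e = v then 1 else 0) := by
  have key : ∀ x u, x ∈ U u → (x ∈ U v ↔ u = v) := fun x u hx =>
    ⟨fun h => M.disj _ _ _ hx h, fun h => h ▸ hx⟩
  rcases M.edge e with ⟨h3, h4⟩ | ⟨h3, h4⟩
  · simp only [key _ _ h3, key _ _ h4]
  · simp only [key _ _ h3, key _ _ h4]; rw [add_comm]

lemma Model.sum_bd (M : Model tl hd U r) (T : Finset LE) (hT : ∀ e ∈ T, Inner U e) (z : LE → F2)
    (hz : ∀ e, e ∉ T ∪ Finset.univ.image r → z e = 0) (v : V) :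
    ∑ x ∈ U v, bd z x = gb tl hd (z ∘ r) v := by
  rw [TK.sum_bd _ z hz, Finset.sum_union, Finset.sum_image fun a _ b _ h => M.inj h, gb_apply]
  · rw [Finset.sum_eq_zero, zero_add]
    · exact Finset.sum_congr rfl fun e _ => by rw [M.inc]; rfl
    · intro e he
      obtain ⟨w, h1, h2⟩ := hT e he
      by_cases h : w = v
      · subst h; simp [h1, h2, two0]
      · have h3 : ea e ∉ U v := fun h' => h (M.disj _ _ _ h1 h')
        have h4 : eb e ∉ U v := fun h' => h (M.disj _ _ _ h2 h')
        simp [h3, h4]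
  · rw [Finset.disjoint_left]
    intro e he he'
    simp at he'
    obtain ⟨a, rfl⟩ := he'
    exact M.not_inner a (hT _ he)

def Surj (tl hd : E → V) (r : E → LE) (T : Finset LE) : Prop := ∀ c, gb tl hd c = 0 →
  ∃ z : LE → F2, (∀ e, e ∉ T ∪ Finset.univ.image r → z e = 0) ∧ bd z = 0 ∧ z ∘ r = c

lemma finite_inner (U : V → Finset (ℤ × ℤ)) : {e | Inner U e}.Finite := by
  let S := Finset.univ.biUnion U
  have hinj : Function.Injective (fun e => (ea e, eb e)) := by
    intro e e' h
    cases e <;> cases e' <;> simp [ea, eb] at h ⊢ <;> omega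
  refine Set.Finite.subset ((S ×ˢ S).finite_toSet.preimage hinj.injOn) ?_
  rintro e ⟨v, h1, h2⟩
  simp [S]
  exact ⟨⟨v, h1⟩, ⟨v, h2⟩⟩

lemma Model.exists_surj (M : Model tl hd U r) :
    ∃ T : Finset LE, (∀ e ∈ T, Inner U e) ∧ Surj tl hd r T := by
  refine ⟨(finite_inner U).toFinset, fun e he => by simpa using he, fun c hc => ?_⟩
  choose ρ hρ using M.nonempty
  have hk : ∀ v, ∀ x, ∃ k : LE → F2, (∀ e, ¬ Inner U e → k e = 0) ∧
      (x ∈ U v → bd k = Pi.single x 1 + Pi.single (ρ v) 1) := by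
    intro v x
    by_cases hx : x ∈ U v
    · obtain ⟨k, h1, h2⟩ := exists_chain _ _ _ (M.conn v x hx (ρ v) (hρ v))
      refine ⟨k, fun e he => ?_, fun _ => h2⟩
      by_contra h
      exact he ⟨v, h1 e h⟩
    · exact ⟨0, by simp, fun h => absurd h hx⟩
  choose k hk1 hk2 using hk
  let z0 : LE → F2 := ∑ e, c e • Pi.single (r e) (1 : F2)
  have z0r : ∀ e, z0 (r e) = c e := by
    intro e
    simp only [z0, Finset.sum_apply, Pi.smul_apply, Pi.single_apply, smul_eq_mul, M.inj.eq_iff]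
    simp
  have z0n : ∀ e, e ∉ Finset.univ.image r → z0 e = 0 := by
    intro e he
    simp only [z0, Finset.sum_apply, Pi.smul_apply, Pi.single_apply, smul_eq_mul]
    apply Finset.sum_eq_zero
    intro a _
    rw [if_neg (fun h => he (by simp [h])), mul_zero]
  have z0b : ∀ y, (∀ v, y ∉ U v) → bd z0 y = 0 := by
    intro y hy
    simp only [z0, map_sum, map_smul, Finset.sum_apply, Pi.smul_apply, smul_eq_mul, bd_single]
    apply Finset.sum_eq_zero
    intro e _
    have h1 : ea (r e) ≠ y := by
      rintro rfl
      rcases M.edge e with ⟨a, b⟩ | ⟨a, b⟩ <;> exact hy _ a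
    have h2 : eb (r e) ≠ y := by
      rintro rfl
      rcases M.edge e with ⟨a, b⟩ | ⟨a, b⟩ <;> exact hy _ b
    simp [h1, h2]
  have z0s : ∀ v, ∑ x ∈ U v, bd z0 x = 0 := by
    intro v
    rw [M.sum_bd ∅ (by simp) z0 (fun e he => z0n e (by simpa using he))]
    have : z0 ∘ r = c := funext z0r
    rw [this, hc]; rfl
  refine ⟨z0 + ∑ v, ∑ x ∈ U v, bd z0 x • k v x, ?_, ?_, ?_⟩
  · intro e he
    simp only [Finset.mem_union, not_or] at he
    have hin : ¬ Inner U e := by simpa using he.1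
    simp [z0n e he.2, Finset.sum_apply, hk1 _ _ e hin]
  · ext y
    simp only [map_add, map_sum, map_smul, Finset.sum_apply, Pi.add_apply, Pi.smul_apply, smul_eq_mul, Pi.zero_apply]
    have : ∀ v, ∑ x ∈ U v, bd z0 x * bd (k v x) y = if y ∈ U v then bd z0 y else 0 := by
      intro v
      have : ∀ x ∈ U v, bd z0 x * bd (k v x) y =
          bd z0 x * (if y = x then 1 else 0) + bd z0 x * (if y = ρ v then 1 else 0) := by
        intro x hx
        rw [hk2 v x hx]
        simp only [Pi.add_apply, Pi.single_apply, mul_add]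
      rw [Finset.sum_congr rfl this, Finset.sum_add_distrib, ← Finset.sum_mul, z0s, zero_mul, add_zero]
      simp
    simp only [this]
    by_cases hy : ∃ v, y ∈ U v
    · obtain ⟨v, hv⟩ := hy
      rw [Finset.sum_eq_single v, if_pos hv, two0]
      · intro w _ hw
        rw [if_neg]
        exact fun h => hw (M.disj _ _ _ h hv)
      · simp
    · push Not at hy
      simp [hy, z0b y hy]
  · ext e
    simp only [Function.comp, Pi.add_apply, z0r, Finset.sum_apply, Pi.smul_apply, smul_eq_mul,
      hk1 _ _ _ (M.not_inner e)]
    simp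

lemma Model.exists_tree (M : Model tl hd U r) :
    ∃ T : Finset LE, (∀ e ∈ T, Inner U e) ∧ Surj tl hd r T ∧
      ∀ z : LE → F2, (∀ e, e ∉ T ∪ Finset.univ.image r → z e = 0) → bd z = 0 → z ∘ r = 0 →
        z = 0 := by
  let P : Set (Finset LE) := {T | (∀ e ∈ T, Inner U e) ∧ Surj tl hd r T}
  obtain ⟨T, ⟨hT1, hT2⟩, hmin⟩ := (wellFounded_lt (α := Finset LE)).has_min P M.exists_surj
  refine ⟨T, hT1, hT2, fun k hk hb hr => ?_⟩
  by_contra hne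
  obtain ⟨t, ht⟩ := Function.ne_iff.1 hne
  simp only [Pi.zero_apply] at ht
  have htr : t ∉ Finset.univ.image r := by
    intro h
    simp at h
    obtain ⟨a, rfl⟩ := h
    exact ht (congrFun hr a)
  have htT : t ∈ T := by
    by_contra h
    exact ht (hk t (by simp [h] ; simpa using htr))
  have hk1 : k t = 1 := by
    revert ht; generalize k t = a; revert a; decide
  refine hmin (T.erase t) ⟨fun e he => hT1 e (Finset.mem_of_mem_erase he), fun c hc => ?_⟩
    (Finset.erase_ssubset htT)
  obtain ⟨z, h1, h2, h3⟩ := hT2 c hc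
  refine ⟨z + z t • k, ?_, by simp [h2, hb], ?_⟩
  · intro e he
    by_cases h : e = t
    · subst h; simp [hk1, two0]
    · have : e ∉ T ∪ Finset.univ.image r := by
        simp only [Finset.mem_union, Finset.mem_erase, not_or, not_and] at he ⊢
        exact ⟨he.1 h, he.2⟩
      simp [h1 e this, hk e this]
  · ext e
    have := congrFun hr e
    have h3' := congrFun h3 e
    simp at this h3' ⊢
    simp [this, h3']

theorem Model.bound (M : Model tl hd U r) (col : V → Bool) (hcol : ∀ e, col (tl e) ≠ col (hd e))
    (hV : 3 ≤ Fintype.card V) : Fintype.card E + 4 ≤ 2 * Fintype.card V := by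
  obtain ⟨T, hT1, hT2, hT3⟩ := M.exists_tree
  set H := T ∪ Finset.univ.image r with hH
  let R : Tri → Tri → Prop := fun s t => ∃ e, e ∉ H ∧ lt e = s ∧ rt e = t
  let Face := Quot R
  let mk : Tri → Face := Quot.mk R
  have hmk : ∀ e, e ∉ H → mk (lt e) = mk (rt e) := fun e he => Quot.sound ⟨e, he, rfl, rfl⟩
  have hsup : ∀ g : Face → F2, ∀ e, e ∉ H → dl (g ∘ mk) e = 0 := by
    intro g e he
    rw [dl_apply]; simp only [Function.comp]; rw [hmk e he, two0]
  have hcyc : ∀ g : Face → F2, gb tl hd (dl (g ∘ mk) ∘ r) = 0 := by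
    intro g
    ext v
    rw [← M.sum_bd T hT1 _ (hsup g), bd_dl]; simp
  have hnz : ∀ A B : Face, A ≠ B → dl ((Pi.single A (1 : F2) : Face → F2) ∘ mk) ∘ r ≠ 0 := by
    intro A B hAB h
    have h1 := hT3 _ (hsup _) (bd_dl _) h
    obtain ⟨a, rfl⟩ := Quot.exists_rep A
    obtain ⟨b, rfl⟩ := Quot.exists_rep B
    have := dl_const _ h1 a b
    simp [mk, hAB.symm] at this
  have hfin : Finite Face := by
    by_cases hsub : Subsingleton Face
    · infer_instance
    · have hsub' := not_subsingleton_iff_nontrivial.1 hsub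
      have : (Set.univ : Set Face) ⊆ ((H.image fun e => mk (lt e)) ∪ (H.image fun e => mk (rt e)) : Finset Face) := by
        intro A _
        obtain ⟨B, hB⟩ := exists_ne A
        obtain ⟨e, he⟩ := Function.ne_iff.1 (hnz A B hB.symm)
        simp only [Function.comp, dl_apply, Pi.zero_apply] at he
        have heH : r e ∈ H := by simp [hH]
        simp only [Finset.coe_union, Finset.coe_image, Set.mem_union, Set.mem_image]
        by_contra hcon
        push Not at hcon
        have h1 := hcon.1 _ heH
        have h2 := hcon.2 _ heH
        simp [Pi.single_apply, h1, h2] at he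
      exact Set.finite_univ_iff.1 ((Finset.finite_toSet _).subset this)
  have := Fintype.ofFinite Face
  let Φ : (Face → F2) →ₗ[F2] (E → F2) :=
    { toFun := fun g => dl (g ∘ mk) ∘ r
      map_add' := fun a b => by ext x; simp [dl_apply]; ring
      map_smul' := fun a b => by ext x; simp [dl_apply]; ring }
  have h1 := LinearMap.finrank_range_add_finrank_ker Φ
  have h2 : LinearMap.ker (gb tl hd) ≤ LinearMap.range Φ := by
    intro c hc
    obtain ⟨z, hz1, hz2, hz3⟩ := hT2 c hc
    obtain ⟨g, hg⟩ := exists_dl H z hz1 hz2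
    have hgR : ∀ s t, R s t → g s = g t := by
      rintro s t ⟨e, he, rfl, rfl⟩
      apply eq_of_add
      rw [← dl_apply, hg, hz1 e he]
    refine ⟨Quot.lift g hgR, ?_⟩
    change dl g ∘ r = c
    rw [hg, hz3]
  have h3 : 0 < Module.finrank F2 (LinearMap.ker Φ) := by
    rw [Module.finrank_pos_iff]
    refine ⟨⟨0, ⟨fun _ => 1, ?_⟩, ?_⟩⟩
    · rw [LinearMap.mem_ker]; ext e
      simp [Φ, dl_apply, two0]
    · intro h
      have := congrFun (congrArg Subtype.val h) (mk (true, 0, 0))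
      simp at this
  have h4 := Submodule.finrank_mono h2
  have h5 := finrank_gb tl hd (by omega : 0 < Fintype.card V)
  rw [Module.finrank_fintype_fun_eq_card] at h1
  by_cases hsub : Subsingleton Face
  · have := Fintype.card_le_one_iff_subsingleton.2 hsub
    omega
  · have hsub' := not_subsingleton_iff_nontrivial.1 hsub
    have h6 : ∀ A : Face, 4 ≤ (Finset.univ.filter fun e => Φ (Pi.single A 1) e ≠ 0).card := by
      intro A
      obtain ⟨B, hB⟩ := exists_ne A
      exact four_le tl hd col hcol M.simple _ (hcyc _) (hnz A B hB.symm)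
    have h7 : Fintype.card Face * 4 ≤ ∑ A : Face, (Finset.univ.filter fun e => Φ (Pi.single A 1) e ≠ 0).card := by
      rw [← Finset.card_univ, ← smul_eq_mul]
      exact Finset.card_nsmul_le_sum _ _ _ fun A _ => h6 A
    have h8 : ∑ A : Face, (Finset.univ.filter fun e => Φ (Pi.single A 1) e ≠ 0).card ≤ Fintype.card E * 2 := by
      simp only [Finset.card_filter]
      rw [Finset.sum_comm, ← Finset.card_univ, ← smul_eq_mul]
      apply Finset.sum_le_card_nsmul
      intro e _
      rw [← Finset.card_filter]
      refine (Finset.card_le_card (t := {mk (lt (r e)), mk (rt (r e))}) ?_).trans Finset.card_le_two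
      intro A hA
      simp only [Finset.mem_filter, Finset.mem_univ, true_and] at hA
      simp only [Finset.mem_insert, Finset.mem_singleton]
      by_contra hcon
      push Not at hcon
      apply hA
      change (Pi.single A (1 : F2) : Face → F2) (mk _) + (Pi.single A (1 : F2) : Face → F2) (mk _) = 0
      simp [Pi.single_apply, hcon.1.symm, hcon.2.symm]
    omega
end euler
end TK

namespace TK
section geom
open Classical

def Cell (n : ℝ) (x : ℤ × ℤ) : Set (ℝ × ℝ) :=
  {p | (2 * x.1 + x.2 : ℝ) ≤ n * p.1 ∧ n * p.1 ≤ 2 * x.1 + x.2 + 2 ∧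
    (x.2 : ℝ) ≤ n * p.2 ∧ n * p.2 ≤ x.2 + 1}

lemma cell_cover (n : ℝ) (p : ℝ × ℝ) : ∃ x, p ∈ Cell n x := by
  refine ⟨(⌊(n * p.1 - ⌊n * p.2⌋) / 2⌋, ⌊n * p.2⌋), ?_⟩
  have h1 := Int.floor_le (n * p.2)
  have h2 := Int.lt_floor_add_one (n * p.2)
  have h3 := Int.floor_le ((n * p.1 - ⌊n * p.2⌋) / 2)
  have h4 := Int.lt_floor_add_one ((n * p.1 - ⌊n * p.2⌋) / 2)
  refine ⟨?_, ?_, ?_, ?_⟩ <;> simp only <;> linarith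

lemma cell_adj {n : ℝ} {p : ℝ × ℝ} {x y : ℤ × ℤ} (hx : p ∈ Cell n x) (hy : p ∈ Cell n y) :
    x = y ∨ lAdj x y := by
  obtain ⟨i, j⟩ := x
  obtain ⟨k, l⟩ := y
  obtain ⟨a1, a2, a3, a4⟩ := hx
  obtain ⟨b1, b2, b3, b4⟩ := hy
  simp only at *
  have c1 : (2 * i + j : ℝ) ≤ 2 * k + l + 2 := by linarith
  have c2 : (2 * k + l : ℝ) ≤ 2 * i + j + 2 := by linarith
  have c3 : (j : ℝ) ≤ l + 1 := by linarith
  have c4 : (l : ℝ) ≤ j + 1 := by linarith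
  norm_cast at c1 c2 c3 c4
  have : (l = j ∧ k = i) ∨ (l = j ∧ k = i + 1) ∨ (l = j ∧ i = k + 1) ∨ (l = j + 1 ∧ k = i) ∨
    (l = j + 1 ∧ i = k + 1) ∨ (j = l + 1 ∧ k = i) ∨ (j = l + 1 ∧ k = i + 1) := by omega
  rcases this with ⟨rfl, rfl⟩ | ⟨rfl, rfl⟩ | ⟨rfl, rfl⟩ | ⟨rfl, rfl⟩ | ⟨rfl, rfl⟩ | ⟨rfl, rfl⟩ | ⟨rfl, rfl⟩
  · left; rfl
  · right; exact ⟨.h i l, Or.inl ⟨rfl, rfl⟩⟩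
  · right; exact ⟨.h k l, Or.inr ⟨rfl, rfl⟩⟩
  · right; exact ⟨.v k j, Or.inl ⟨rfl, rfl⟩⟩
  · right; exact ⟨.d k j, Or.inl ⟨rfl, rfl⟩⟩
  · right; exact ⟨.v k l, Or.inr ⟨rfl, rfl⟩⟩
  · right; exact ⟨.d i l, Or.inr ⟨rfl, rfl⟩⟩

lemma cell_closed (n : ℝ) (x : ℤ × ℤ) : IsClosed (Cell n x) := by
  simp only [Cell, Set.setOf_and]
  refine IsClosed.inter (isClosed_le (by fun_prop) (by fun_prop)) <|
    IsClosed.inter (isClosed_le (by fun_prop) (by fun_prop)) <|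
    IsClosed.inter (isClosed_le (by fun_prop) (by fun_prop))
    (isClosed_le (by fun_prop) (by fun_prop))

lemma cell_dist {n : ℝ} (hn : 0 < n) {p q : ℝ × ℝ} {x : ℤ × ℤ} (hp : p ∈ Cell n x)
    (hq : q ∈ Cell n x) : dist p q ≤ 2 / n := by
  obtain ⟨a1, a2, a3, a4⟩ := hp
  obtain ⟨b1, b2, b3, b4⟩ := hq
  rw [Prod.dist_eq, Real.dist_eq, Real.dist_eq]
  apply max_le
  · rw [abs_le, le_div_iff₀ hn, neg_le_iff_add_nonneg, ← mul_le_mul_iff_of_pos_left hn, mul_zero, mul_add, mul_div_cancel₀ _ hn.ne']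
    constructor <;> linarith
  · rw [abs_le, le_div_iff₀ hn, neg_le_iff_add_nonneg, ← mul_le_mul_iff_of_pos_left hn, mul_zero, mul_add, mul_div_cancel₀ _ hn.ne']
    constructor <;> linarith

def cells (n : ℝ) (B : Set (ℝ × ℝ)) : Set (ℤ × ℤ) := {x | (Cell n x ∩ B).Nonempty}

lemma cells_finite {n : ℝ} (hn : 0 < n) {B : Set (ℝ × ℝ)} (hB : IsCompact B) :
    (cells n B).Finite := by
  obtain ⟨C, hC⟩ := hB.isBounded.subset_closedBall 0
  obtain ⟨K, hK⟩ := exists_nat_gt (n * C)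
  have : cells n B ⊆ (Set.Icc (-(2 * K + 3 : ℤ)) (2 * K + 3)) ×ˢ (Set.Icc (-(2 * K + 3 : ℤ)) (2 * K + 3)) := by
    rintro ⟨i, j⟩ ⟨p, ⟨a1, a2, a3, a4⟩, hp⟩
    have := hC hp
    rw [Metric.mem_closedBall, dist_zero_right, Prod.norm_def, max_le_iff, Real.norm_eq_abs, Real.norm_eq_abs, abs_le, abs_le] at this
    obtain ⟨⟨b1, b2⟩, b3, b4⟩ := this
    have c1 : -(K : ℝ) ≤ n * p.1 := by nlinarith
    have c2 : n * p.1 ≤ K := by nlinarith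
    have c3 : -(K : ℝ) ≤ n * p.2 := by nlinarith
    have c4 : n * p.2 ≤ K := by nlinarith
    simp only at a1 a2 a3 a4
    have d1 : (2 * i + j : ℝ) ≤ K := by linarith
    have d2 : -(K : ℝ) ≤ 2 * i + j + 2 := by linarith
    have d3 : (j : ℝ) ≤ K := by linarith
    have d4 : -(K : ℝ) ≤ j + 1 := by linarith
    norm_cast at d1 d2 d3 d4
    simp only [Set.mem_prod, Set.mem_Icc]
    push_cast at d1 d2 d3 d4 
    omega
  exact Set.Finite.subset ((Set.finite_Icc _ _).prod (Set.finite_Icc _ _)) this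

lemma cells_conn {n : ℝ} (hn : 0 < n) {B : Set (ℝ × ℝ)} (hB : IsCompact B) (hc : IsPreconnected B) :
    LConn (cells n B) := by
  intro x hx y hy
  by_contra hxy
  have hfin := cells_finite hn hB
  let rel := fun a b => a ∈ cells n B ∧ b ∈ cells n B ∧ lAdj a b
  let S := {w | w ∈ cells n B ∧ Relation.ReflTransGen rel x w}
  let S' := {w | w ∈ cells n B ∧ ¬ Relation.ReflTransGen rel x w}
  have c1 : IsClosed (⋃ w ∈ S, Cell n w) :=
    (hfin.subset fun w hw => hw.1).isClosed_biUnion fun w _ => cell_closed n w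
  have c2 : IsClosed (⋃ w ∈ S', Cell n w) :=
    (hfin.subset fun w hw => hw.1).isClosed_biUnion fun w _ => cell_closed n w
  obtain ⟨px, hpx, hpx'⟩ := hx
  obtain ⟨py, hpy, hpy'⟩ := hy
  obtain ⟨b, hb, hb1, hb2⟩ := isPreconnected_closed_iff.1 hc _ _ c1 c2 (by
      intro b hb
      obtain ⟨w, hw⟩ := cell_cover n b
      have hwc : w ∈ cells n B := ⟨b, hw, hb⟩
      by_cases h : Relation.ReflTransGen rel x w
      · left; exact Set.mem_biUnion (⟨hwc, h⟩ : w ∈ S) hw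
      · right; exact Set.mem_biUnion (⟨hwc, h⟩ : w ∈ S') hw)
    ⟨px, hpx', Set.mem_biUnion (⟨⟨px, hpx, hpx'⟩, Relation.ReflTransGen.refl⟩ : x ∈ S) hpx⟩
    ⟨py, hpy', Set.mem_biUnion (⟨⟨py, hpy, hpy'⟩, hxy⟩ : y ∈ S') hpy⟩
  simp only [Set.mem_iUnion] at hb1 hb2
  obtain ⟨u, ⟨hu, hu'⟩, hbu⟩ := hb1
  obtain ⟨w, ⟨hw, hw'⟩, hbw⟩ := hb2
  rcases cell_adj hbu hbw with rfl | h
  · exact hw' hu'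
  · exact hw' (hu'.tail ⟨hu, hw, h⟩)

lemma cells_nonempty (n : ℝ) {B : Set (ℝ × ℝ)} {p : ℝ × ℝ} (hp : p ∈ B) : ∃ x, x ∈ cells n B ∧ p ∈ Cell n x := by
  obtain ⟨x, hx⟩ := cell_cover n p
  exact ⟨x, ⟨p, hx, hp⟩, hx⟩

/-- small cells separate finitely many disjoint compact sets -/
lemma exists_scale {ι : Type} [Finite ι] (B : ι → Set (ℝ × ℝ)) (hB : ∀ i, IsCompact (B i)) :
    ∃ n : ℝ, 0 < n ∧ ∀ i j, Disjoint (B i) (B j) → Disjoint (cells n (B i)) (cells n (B j)) := by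
  have h : ∀ i j, ∃ m : ℝ, 0 < m ∧ ∀ n, m ≤ n → Disjoint (B i) (B j) → Disjoint (cells n (B i)) (cells n (B j)) := by
    intro i j
    by_cases hd : Disjoint (B i) (B j)
    · obtain ⟨r, hr, h⟩ := Metric.exists_pos_forall_lt_edist (hB i) (hB j).isClosed hd
      refine ⟨2 / r, by positivity, fun n hn _ => ?_⟩
      rw [Set.disjoint_left]
      rintro x ⟨p, hp, hpB⟩ ⟨q, hq, hqB⟩
      have hr' : (0 : ℝ) < r := by exact_mod_cast hr
      have hn0 : 0 < n := lt_of_lt_of_le (by positivity) hn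
      have h1 := cell_dist hn0 hp hq
      have h2 := h p hpB q hqB
      rw [edist_dist, ← ENNReal.ofReal_coe_nnreal] at h2
      replace h2 := (ENNReal.ofReal_lt_ofReal_iff_of_nonneg r.coe_nonneg).1 h2
      rw [div_le_iff₀ hr'] at hn
      rw [le_div_iff₀ hn0] at h1
      nlinarith
    · exact ⟨1, one_pos, fun _ _ h => absurd h hd⟩
  choose m hm h using h
  have := Fintype.ofFinite ι
  refine ⟨1 + ∑ i, ∑ j, m i j, ?_, fun i j => h i j _ ?_⟩
  · have : 0 ≤ ∑ i, ∑ j, m i j := Finset.sum_nonneg fun i _ => Finset.sum_nonneg fun j _ => (hm i j).le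
    linarith
  · have h1 : m i j ≤ ∑ j, m i j := Finset.single_le_sum (f := fun j => m i j) (fun j _ => (hm i j).le) (Finset.mem_univ j)
    have h2 : ∑ j, m i j ≤ ∑ i, ∑ j, m i j := Finset.single_le_sum (f := fun i => ∑ j, m i j)
      (fun i _ => Finset.sum_nonneg fun j _ => (hm i j).le) (Finset.mem_univ i)
    linarith
end geom
end TK

namespace TK
section geom2
open Classical

lemma lAdj_symm {x y : ℤ × ℤ} (h : lAdj x y) : lAdj y x := by
  obtain ⟨e, h⟩ := h
  exact ⟨e, h.symm⟩

lemma lconn_of_root {S : Set (ℤ × ℤ)} (ρ : ℤ × ℤ)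
    (h : ∀ x ∈ S, Relation.ReflTransGen (fun a b => a ∈ S ∧ b ∈ S ∧ lAdj a b) ρ x) : LConn S := by
  intro x hx y hy
  refine Relation.ReflTransGen.trans ?_ (h y hy)
  have h2 := h x hx
  clear hx
  induction h2 with
  | refl => exact Relation.ReflTransGen.refl
  | tail _ hc ih => exact Relation.ReflTransGen.head ⟨hc.2.1, hc.1, lAdj_symm hc.2.2⟩ ih

theorem exists_model {V : Type} [Fintype V] (G : SimpleGraph V) (hp : IsPlanar G) :
    ∃ (tl hd : G.edgeSet → V) (U : V → Finset (ℤ × ℤ)) (r : G.edgeSet → LE),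
      (∀ e : G.edgeSet, (e : Sym2 V) = s(tl e, hd e)) ∧ Model tl hd U r := by
  obtain ⟨f, γ, hf, hcont, hend, hinj, hint, hmeet⟩ := hp
  choose tl hd he h0 h1 using hend
  have hne : ∀ e, tl e ≠ hd e := fun e h => by
    have h2 := e.2
    rw [he e, SimpleGraph.mem_edgeSet, h] at h2
    exact h2.ne rfl
  have hsimple : ∀ e e', s(tl e, hd e) = s(tl e', hd e') → e = e' := fun e e' h =>
    Subtype.ext (by rw [he e, he e', h])
  -- extended arcs
  let Γ : G.edgeSet → ℝ → ℝ × ℝ := fun e t => γ e (Set.projIcc 0 1 zero_le_one t)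
  have hΓ : ∀ e t (ht : t ∈ Set.Icc (0 : ℝ) 1), Γ e t = γ e ⟨t, ht⟩ := fun e t ht => by
    simp only [Γ]; rw [Set.projIcc_of_mem]
  have hΓc : ∀ e, Continuous (Γ e) := fun e => (hcont e).comp continuous_projIcc
  have hΓ0 : ∀ e, Γ e 0 = f (tl e) := fun e => by rw [hΓ e 0 (by simp)]; exact h0 e
  have hΓ1 : ∀ e, Γ e 1 = f (hd e) := fun e => by rw [hΓ e 1 (by simp)]; exact h1 e
  have P1 : ∀ e s t, s ∈ Set.Icc (0 : ℝ) 1 → t ∈ Set.Icc (0 : ℝ) 1 → Γ e s = Γ e t → s = t := by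
    intro e s t hs ht h
    rw [hΓ e s hs, hΓ e t ht] at h
    exact congrArg Subtype.val (hinj e h)
  have P2 : ∀ e t v, 0 < t → t < 1 → Γ e t ≠ f v := by
    intro e t v a b
    rw [hΓ e t ⟨a.le, b.le⟩]
    exact hint e _ a.ne' b.ne v
  have P3 : ∀ e e', e ≠ e' → ∀ s t, s ∈ Set.Icc (0 : ℝ) 1 → t ∈ Set.Icc (0 : ℝ) 1 → Γ e s = Γ e' t →
      ∃ v, f v = Γ e s := by
    intro e e' hee s t hs ht h
    rw [hΓ e s hs, hΓ e' t ht] at h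
    have := hmeet e e' hee _ _ h
    rw [hΓ e s hs]
    exact this
  let B : V → Set (ℝ × ℝ) := fun v => {f v} ∪ (⋃ e ∈ {e | tl e = v}, Γ e '' Set.Icc 0 (1/3)) ∪
    (⋃ e ∈ {e | hd e = v}, Γ e '' Set.Icc (2/3) 1)
  let M : G.edgeSet → Set (ℝ × ℝ) := fun e => Γ e '' Set.Icc (1/3) (2/3)
  have hBmem : ∀ v p, p ∈ B v ↔ p = f v ∨ (∃ e t, ((tl e = v ∧ 0 ≤ t ∧ t ≤ 1/3) ∨
      (hd e = v ∧ 2/3 ≤ t ∧ t ≤ 1)) ∧ Γ e t = p) := by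
    intro v p
    simp only [B, Set.mem_union, Set.mem_singleton_iff, Set.mem_iUnion, Set.mem_image, Set.mem_Icc,
      Set.mem_setOf_eq]
    constructor
    · rintro ((h | ⟨e, h, t, ht, h'⟩) | ⟨e, h, t, ht, h'⟩)
      · exact Or.inl h
      · exact Or.inr ⟨e, t, Or.inl ⟨h, ht⟩, h'⟩
      · exact Or.inr ⟨e, t, Or.inr ⟨h, ht⟩, h'⟩
    · rintro (h | ⟨e, t, ⟨h, ht⟩ | ⟨h, ht⟩, h'⟩)
      · exact Or.inl (Or.inl h)
      · exact Or.inl (Or.inr ⟨e, h, t, ht, h'⟩)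
      · exact Or.inr ⟨e, h, t, ht, h'⟩
  have hBc : ∀ v, IsCompact (B v) := by
    intro v
    refine (isCompact_singleton.union ?_).union ?_
    · exact (Set.toFinite _).isCompact_biUnion fun e _ => isCompact_Icc.image (hΓc e)
    · exact (Set.toFinite _).isCompact_biUnion fun e _ => isCompact_Icc.image (hΓc e)
  have hBp : ∀ v, IsPreconnected (B v) := by
    intro v
    apply isPreconnected_of_forall (f v)
    intro p hp
    rcases (hBmem v p).1 hp with rfl | ⟨e, t, ⟨h, ht⟩ | ⟨h, ht⟩, rfl⟩
    · exact ⟨{f v}, by simpa using hp, by simp, by simp, isPreconnected_singleton⟩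
    · refine ⟨Γ e '' Set.Icc 0 (1/3), ?_, ⟨0, by norm_num, by rw [hΓ0, h]⟩, ⟨t, ht, rfl⟩,
        isPreconnected_Icc.image _ (hΓc e).continuousOn⟩
      rintro _ ⟨s, hs, rfl⟩
      exact (hBmem v _).2 (Or.inr ⟨e, s, Or.inl ⟨h, hs⟩, rfl⟩)
    · refine ⟨Γ e '' Set.Icc (2/3) 1, ?_, ⟨1, by norm_num, by rw [hΓ1, h]⟩, ⟨t, ht, rfl⟩,
        isPreconnected_Icc.image _ (hΓc e).continuousOn⟩
      rintro _ ⟨s, hs, rfl⟩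
      exact (hBmem v _).2 (Or.inr ⟨e, s, Or.inr ⟨h, hs⟩, rfl⟩)
  have hα' : ∀ v p, p ∈ B v → p = f v ∨ ∃ e t, 0 < t ∧ t < 1 ∧ Γ e t = p := by
    intro v p hp
    rcases (hBmem v p).1 hp with rfl | ⟨e, t, ⟨h, ht⟩ | ⟨h, ht⟩, rfl⟩
    · exact Or.inl rfl
    · rcases ht.1.eq_or_lt with rfl | h0
      · left; rw [hΓ0, h]
      · exact Or.inr ⟨e, t, h0, by linarith, rfl⟩
    · rcases ht.2.eq_or_lt with rfl | h0
      · left; rw [hΓ1, h]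
      · exact Or.inr ⟨e, t, by linarith, h0, rfl⟩
  have hα : ∀ v w, f w ∈ B v → v = w := by
    intro v w h
    rcases hα' v _ h with h | ⟨e, t, a, b, h⟩
    · exact (hf h).symm
    · exact absurd h (P2 e t w a b)
  have hβ : ∀ v e t, 0 < t → t < 1 → Γ e t ∈ B v → (tl e = v ∧ t ≤ 1/3) ∨ (hd e = v ∧ 2/3 ≤ t) := by
    intro v e t a b hm
    rcases (hBmem v _).1 hm with h | ⟨e', t', h, h'⟩
    · exact absurd h (P2 e t v a b)
    · have ht' : t' ∈ Set.Icc (0 : ℝ) 1 := by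
        rcases h with ⟨_, h⟩ | ⟨_, h⟩ <;> constructor <;> linarith [h.1, h.2]
      have ht : t ∈ Set.Icc (0 : ℝ) 1 := ⟨a.le, b.le⟩
      by_cases hee : e = e'
      · subst hee
        have := P1 e t' t ht' ht h'
        rw [this] at h
        exact h.imp (fun k => ⟨k.1, k.2.2⟩) (fun k => ⟨k.1, k.2.1⟩)
      · obtain ⟨w, hw⟩ := P3 e e' hee t t' ht ht' h'.symm
        exact absurd hw.symm (P2 e t w a b)
  have dBB : ∀ u v, u ≠ v → Disjoint (B u) (B v) := by
    intro u v huv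
    rw [Set.disjoint_left]
    intro p hu hv
    rcases hα' u p hu with rfl | ⟨e, t, a, b, rfl⟩
    · exact huv (hα v u hv).symm
    · rcases hβ u e t a b hu with ⟨c, d⟩ | ⟨c, d⟩ <;> rcases hβ v e t a b hv with ⟨c', d'⟩ | ⟨c', d'⟩
      · exact huv (c.symm.trans c')
      · linarith
      · linarith
      · exact huv (c.symm.trans c')
  have dMB : ∀ e v, v ≠ tl e → v ≠ hd e → Disjoint (M e) (B v) := by
    intro e v ht hh
    rw [Set.disjoint_left]
    rintro _ ⟨t, ⟨a, b⟩, rfl⟩ hv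
    rcases hβ v e t (by linarith) (by linarith) hv with ⟨c, d⟩ | ⟨c, d⟩
    · exact ht c.symm
    · exact hh c.symm
  have dMM : ∀ e e', e ≠ e' → Disjoint (M e) (M e') := by
    intro e e' hee
    rw [Set.disjoint_left]
    rintro _ ⟨t, ⟨a, b⟩, rfl⟩ ⟨s, ⟨c, d⟩, h⟩
    obtain ⟨w, hw⟩ := P3 e e' hee t s ⟨by linarith, by linarith⟩ ⟨by linarith, by linarith⟩ h.symm
    exact absurd hw.symm (P2 e t w (by linarith) (by linarith))
  have hMc : ∀ e, IsCompact (M e) := fun e => isCompact_Icc.image (hΓc e)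
  have hMp : ∀ e, IsPreconnected (M e) := fun e => isPreconnected_Icc.image _ (hΓc e).continuousOn
  obtain ⟨n, hn, hsep⟩ := exists_scale (ι := V ⊕ G.edgeSet) (Sum.elim B M) (by
    rintro (v | e)
    · exact hBc v
    · exact hMc e)
  let U0 : V → Set (ℤ × ℤ) := fun v => cells n (B v)
  let Q : G.edgeSet → Set (ℤ × ℤ) := fun e => cells n (M e)
  have sBB : ∀ u v x, x ∈ U0 u → x ∈ U0 v → u = v := by
    intro u v x hu hv
    by_contra h
    exact Set.disjoint_left.1 (hsep (.inl u) (.inl v) (dBB u v h)) hu hv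
  have sMB : ∀ e v x, x ∈ Q e → x ∈ U0 v → v = tl e ∨ v = hd e := by
    intro e v x hu hv
    by_contra h
    push Not at h
    exact Set.disjoint_left.1 (hsep (.inr e) (.inl v) (dMB e v h.1 h.2)) hu hv
  have sMM : ∀ e e' x, x ∈ Q e → x ∈ Q e' → e = e' := by
    intro u v x hu hv
    by_contra h
    exact Set.disjoint_left.1 (hsep (.inr u) (.inr v) (dMM u v h)) hu hv
  have hUl : ∀ v, LConn (U0 v) := fun v => cells_conn hn (hBc v) (hBp v)
  have hQl : ∀ v, LConn (Q v) := fun v => cells_conn hn (hMc v) (hMp v)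
  have hta : ∀ e, ∃ a, a ∈ Q e ∧ a ∈ U0 (tl e) := by
    intro e
    obtain ⟨x, hx, hx'⟩ := cells_nonempty n (B := M e) (p := Γ e (1/3)) ⟨1/3, by norm_num, rfl⟩
    exact ⟨x, hx, ⟨_, hx', (hBmem _ _).2 (Or.inr ⟨e, 1/3, Or.inl (by norm_num), rfl⟩)⟩⟩
  have hhb : ∀ e, ∃ a, a ∈ Q e ∧ a ∈ U0 (hd e) := by
    intro e
    obtain ⟨x, hx, hx'⟩ := cells_nonempty n (B := M e) (p := Γ e (2/3)) ⟨2/3, by norm_num, rfl⟩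
    exact ⟨x, hx, ⟨_, hx', (hBmem _ _).2 (Or.inr ⟨e, 2/3, Or.inr (by norm_num), rfl⟩)⟩⟩
  choose a haQ haU using hta
  choose b hbQ hbU using hhb
  let W : G.edgeSet → Set (ℤ × ℤ) := fun e => Q e \ U0 (hd e)
  let R : G.edgeSet → Set (ℤ × ℤ) := fun e =>
    {x | Relation.ReflTransGen (fun x y => x ∈ W e ∧ y ∈ W e ∧ lAdj x y) (a e) x}
  have haW : ∀ e, a e ∈ W e := fun e => ⟨haQ e, fun h => hne e (sBB _ _ _ (haU e) h)⟩
  have hRW : ∀ e x, x ∈ R e → x ∈ W e := by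
    intro e x hx
    induction hx with
    | refl => exact haW e
    | tail _ h _ => exact h.2.1
  let U1 : V → Set (ℤ × ℤ) := fun v => U0 v ∪ ⋃ e ∈ {e | tl e = v}, R e
  have hU1 : ∀ v x, x ∈ U1 v ↔ x ∈ U0 v ∨ ∃ e, tl e = v ∧ x ∈ R e := by
    intro v x; simp [U1]
  have hfin : ∀ v, (U1 v).Finite := by
    intro v
    refine (cells_finite hn (hBc v)).union ((Set.toFinite _).biUnion fun e _ => ?_)
    exact (cells_finite hn (hMc e)).subset fun x hx => (hRW e x hx).1
  have hedge : ∀ e, ∃ y ∈ R e, ∃ w ∈ U0 (hd e), lAdj y w := by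
    intro e
    have key : ∀ x, Relation.ReflTransGen (fun x y => x ∈ Q e ∧ y ∈ Q e ∧ lAdj x y) (a e) x →
        x ∈ R e ∨ ∃ y ∈ R e, ∃ w ∈ U0 (hd e), lAdj y w := by
      intro x hx
      induction hx with
      | refl => exact Or.inl Relation.ReflTransGen.refl
      | @tail y z _ h ih =>
        rcases ih with ih | ih
        · by_cases hz : z ∈ U0 (hd e)
          · exact Or.inr ⟨y, ih, z, hz, h.2.2⟩
          · exact Or.inl (Relation.ReflTransGen.tail ih ⟨hRW e y ih, ⟨h.2.1, hz⟩, h.2.2⟩)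
        · exact Or.inr ih
    rcases key _ (hQl e (a e) (haQ e) (b e) (hbQ e)) with h | h
    · exact absurd (hbU e) (hRW e _ h).2
    · exact h
  choose y hyR w hwU hyw using hedge
  choose r hr using hyw
  refine ⟨tl, hd, fun v => (hfin v).toFinset, r, he, hne, hsimple, ?_, ?_, ?_, ?_⟩
  · intro v
    obtain ⟨x, hx, _⟩ := cells_nonempty n (B := B v) (p := f v) ((hBmem _ _).2 (Or.inl rfl))
    exact ⟨x, by simp only [Set.Finite.mem_toFinset]; exact (hU1 v x).2 (Or.inl hx)⟩
  · intro v
    rw [Set.Finite.coe_toFinset]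
    obtain ⟨ρ, hρ, _⟩ := cells_nonempty n (B := B v) (p := f v) ((hBmem _ _).2 (Or.inl rfl))
    apply lconn_of_root ρ
    have h1 : ∀ x ∈ U0 v, Relation.ReflTransGen (fun a b => a ∈ U1 v ∧ b ∈ U1 v ∧ lAdj a b) ρ x := by
      intro x hx
      have h2 := hUl v ρ hρ x hx
      clear hx
      induction h2 with
      | refl => exact Relation.ReflTransGen.refl
      | tail _ hc ih =>
        exact ih.tail ⟨(hU1 v _).2 (Or.inl hc.1), (hU1 v _).2 (Or.inl hc.2.1), hc.2.2⟩
    intro x hx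
    rcases (hU1 v x).1 hx with hx' | ⟨e, rfl, hx'⟩
    · exact h1 x hx'
    · induction hx' with
      | refl => exact h1 _ (haU e)
      | @tail p q hp h ih =>
        have hpm : p ∈ U1 (tl e) := (hU1 _ p).2 (Or.inr ⟨e, rfl, hp⟩)
        exact (ih hpm).tail ⟨hpm, hx, h.2.2⟩
  · intro u v x hu hv
    simp only [Set.Finite.mem_toFinset] at hu hv
    have aux : ∀ e v, x ∈ R e → x ∈ U0 v → tl e = v := by
      intro e v h1 h2
      have h3 := hRW e x h1
      rcases sMB e v x h3.1 h2 with rfl | rfl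
      · rfl
      · exact absurd h2 h3.2
    rcases (hU1 u x).1 hu with hu' | ⟨e, rfl, hu'⟩ <;> rcases (hU1 v x).1 hv with hv' | ⟨e', rfl, hv'⟩
    · exact sBB _ _ _ hu' hv'
    · exact (aux _ _ hv' hu').symm
    · exact aux _ _ hu' hv'
    · rw [sMM e e' x (hRW e x hu').1 (hRW e' x hv').1]
  · intro e
    simp only [Set.Finite.mem_toFinset]
    have h1 : y e ∈ U1 (tl e) := (hU1 _ _).2 (Or.inr ⟨e, rfl, hyR e⟩)
    have h2 : w e ∈ U1 (hd e) := (hU1 _ _).2 (Or.inl (hwU e))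
    rcases hr e with ⟨h3, h4⟩ | ⟨h3, h4⟩
    · left; rw [h3, h4]; exact ⟨h1, h2⟩
    · right; rw [h3, h4]; exact ⟨h2, h1⟩

theorem planar_bip {V : Type} [Fintype V] (G : SimpleGraph V) (hp : IsPlanar G) (col : V → Bool)
    (hcol : ∀ u v, G.Adj u v → col u ≠ col v) (hV : 3 ≤ Fintype.card V) :
    Nat.card G.edgeSet + 4 ≤ 2 * Fintype.card V := by
  obtain ⟨tl, hd, U, r, he, M⟩ := exists_model G hp
  have := Fintype.ofFinite G.edgeSet
  rw [Nat.card_eq_fintype_card]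
  refine M.bound col (fun e => hcol _ _ ?_) hV
  have := e.2
  rwa [he e, SimpleGraph.mem_edgeSet] at this
end geom2
end TK

namespace TK
section lower
open Classical

lemma planar_comap {V W : Type} {G : SimpleGraph V} {H : SimpleGraph W} (ι : W → V)
    (hι : Function.Injective ι) (hH : ∀ u v, H.Adj u v → G.Adj (ι u) (ι v)) (hp : IsPlanar G) :
    IsPlanar H := by
  obtain ⟨f, γ, hf, hcont, hend, hinj, hint, hmeet⟩ := hp
  have hm : ∀ e : H.edgeSet, (e : Sym2 W).map ι ∈ G.edgeSet := by
    rintro ⟨e, he⟩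
    induction e with
    | _ u v => exact hH u v he
  let μ : H.edgeSet → G.edgeSet := fun e => ⟨(e : Sym2 W).map ι, hm e⟩
  have hμ : ∀ e e', μ e = μ e' → e = e' := by
    intro e e' h
    exact Subtype.ext (Sym2.map.injective hι (congrArg Subtype.val h))
  have hend' : ∀ e : H.edgeSet, ∃ u v : W, (e : Sym2 W) = s(u, v) ∧
      γ (μ e) ⟨0, by norm_num⟩ = f (ι u) ∧ γ (μ e) ⟨1, by norm_num⟩ = f (ι v) := by
    intro e
    obtain ⟨u, v, h, h0, h1⟩ := hend (μ e)
    obtain ⟨⟨x, y⟩, hxy⟩ := Sym2.mk_surjective (e : Sym2 W)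
    have hxy : s(x, y) = (e : Sym2 W) := hxy
    have h2 : s(ι x, ι y) = s(u, v) := by
      rw [← h]; simp only [μ, ← hxy]; rfl
    rcases Sym2.eq_iff.1 h2 with ⟨a, b⟩ | ⟨a, b⟩
    · exact ⟨x, y, hxy.symm, by rw [h0, a], by rw [h1, b]⟩
    · exact ⟨y, x, by rw [← hxy, Sym2.eq_swap], by rw [h0, b], by rw [h1, a]⟩
  refine ⟨f ∘ ι, fun e => γ (μ e), hf.comp hι, fun e => hcont _, hend', fun e => hinj _,
    fun e t h0 h1 v => hint _ t h0 h1 _, ?_⟩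
  intro e e' hee s t h
  obtain ⟨w, hw⟩ := hmeet (μ e) (μ e') (fun h => hee (hμ _ _ h)) s t h
  obtain ⟨u, v, -, h0, h1⟩ := hend' e
  by_cases hs : (s : ℝ) = 0
  · have : s = ⟨0, by norm_num⟩ := Subtype.ext hs
    exact ⟨u, by rw [this]; exact h0.symm⟩
  · by_cases hs1 : (s : ℝ) = 1
    · have : s = ⟨1, by norm_num⟩ := Subtype.ext hs1
      exact ⟨v, by rw [this]; exact h1.symm⟩
    · exact absurd hw.symm (hint _ s hs hs1 w)

lemma lower_gen {V : Type} (K : SimpleGraph V) (M n : ℕ) (hM : 2 ≤ M) (φ : Fin M ⊕ Fin M → V)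
    (hφ : Function.Injective φ) (hK : ∀ i j, K.Adj (φ (.inl i)) (φ (.inr j)))
    (H : Fin n → SimpleGraph V) (hp : ∀ i, IsPlanar (H i)) (hs : (⨆ i, H i) = K) :
    M * M ≤ n * (4 * M - 4) := by
  let H' : Fin n → SimpleGraph (Fin M ⊕ Fin M) := fun i =>
    (H i).comap φ ⊓ completeBipartiteGraph (Fin M) (Fin M)
  have hb : ∀ i, Nat.card (H' i).edgeSet ≤ 4 * M - 4 := by
    intro i
    have := planar_bip (H' i) (planar_comap φ hφ (fun u v h => h.1) (hp i)) Sum.isLeft (by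
      rintro (u | u) (v | v) ⟨h1, h2⟩ <;> simp_all [completeBipartiteGraph]) (by
      simp; omega)
    simp only [Fintype.card_sum, Fintype.card_fin] at this
    omega
  have hc : ∀ q : Fin M × Fin M, ∃ i, (H' i).Adj (.inl q.1) (.inr q.2) := by
    intro q
    have h := hK q.1 q.2
    rw [← hs, SimpleGraph.iSup_adj] at h
    obtain ⟨i, hi⟩ := h
    exact ⟨i, hi, by simp [completeBipartiteGraph]⟩
  choose c hc using hc
  let F : Fin M × Fin M → Σ i, (H' i).edgeSet := fun q => ⟨c q, ⟨s(.inl q.1, .inr q.2), hc q⟩⟩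
  have hF : Function.Injective F := by
    intro q q' h
    have h2 : ((F q).2 : Sym2 (Fin M ⊕ Fin M)) = (F q').2 := by rw [h]
    have h3 : (s(.inl q.1, .inr q.2) : Sym2 (Fin M ⊕ Fin M)) = s(.inl q'.1, .inr q'.2) := h2
    rcases Sym2.eq_iff.1 h3 with ⟨a, b⟩ | ⟨a, b⟩
    · exact Prod.ext (Sum.inl.inj a) (Sum.inr.inj b)
    · cases a
  have := Nat.card_le_card_of_injective F hF
  rw [Nat.card_sigma] at this
  calc M * M = Nat.card (Fin M × Fin M) := by simp
    _ ≤ _ := this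
    _ ≤ ∑ i : Fin n, (4 * M - 4) := Finset.sum_le_sum fun i _ => hb i
    _ = _ := by simp

/-- The vertex `x` (colour 0) of `K_{1,1,m,m}`. -/
abbrev KV (m : ℕ) := Σ i : Fin 4, (![Fin 1, Fin 1, Fin m, Fin m] : Fin 4 → Type) i

def vx (m : ℕ) : Fin (m + 1) → KV m := Fin.cases ⟨0, (0 : Fin 1)⟩ (fun k => ⟨2, (k : Fin m)⟩)
def vy (m : ℕ) : Fin (m + 1) → KV m := Fin.cases ⟨1, (0 : Fin 1)⟩ (fun k => ⟨3, (k : Fin m)⟩)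

lemma vx_zero (m : ℕ) (i) : (vx m i).1 = 0 ↔ i = 0 := by
  refine Fin.cases ?_ (fun i => ?_) i <;> simp [vx]
lemma vx_inj (m : ℕ) : Function.Injective (vx m) := by
  intro i j
  have hi := vx_zero m i
  have hj := vx_zero m j
  refine Fin.cases ?_ (fun i => ?_) i hi <;> refine Fin.cases ?_ (fun j => ?_) j hj
  · intro _ _ _; rfl
  · intro hj hi h; exact (hj.1 (by rw [← h]; rfl)).symm
  · intro hj hi h; exact (hi.1 (by rw [h]; rfl))
  · intro _ _ h
    have h2 : HEq (i : Fin m) (j : Fin m) := (Sigma.mk.inj h).2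
    rw [eq_of_heq h2]
lemma vy_zero (m : ℕ) (i) : (vy m i).1 = 1 ↔ i = 0 := by
  refine Fin.cases ?_ (fun i => ?_) i <;> simp [vy]
lemma vy_inj (m : ℕ) : Function.Injective (vy m) := by
  intro i j
  have hi := vy_zero m i
  have hj := vy_zero m j
  refine Fin.cases ?_ (fun i => ?_) i hi <;> refine Fin.cases ?_ (fun j => ?_) j hj
  · intro _ _ _; rfl
  · intro hj hi h; exact (hj.1 (by rw [← h]; rfl)).symm
  · intro hj hi h; exact (hi.1 (by rw [h]; rfl))
  · intro _ _ h
    have h2 : HEq (i : Fin m) (j : Fin m) := (Sigma.mk.inj h).2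
    rw [eq_of_heq h2]
lemma vx_col (m : ℕ) (i) : (vx m i).1 = 0 ∨ (vx m i).1 = 2 := by
  refine Fin.cases ?_ (fun i => ?_) i <;> simp [vx]
lemma vy_col (m : ℕ) (i) : (vy m i).1 = 1 ∨ (vy m i).1 = 3 := by
  refine Fin.cases ?_ (fun i => ?_) i <;> simp [vy]
lemma vxy_ne (m : ℕ) (i j) : (vx m i).1 ≠ (vy m j).1 := by
  rcases vx_col m i with h | h <;> rcases vy_col m j with h' | h' <;> rw [h, h'] <;> decide
lemma v_cases (m : ℕ) (v : KV m) : (∃ i, v = vx m i) ∨ ∃ i, v = vy m i := by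
  obtain ⟨i, k⟩ := v
  fin_cases i
  · exact Or.inl ⟨0, by change (⟨0, k⟩ : KV m) = ⟨0, _⟩; congr 1; exact Subsingleton.elim (α := Fin 1) _ _⟩
  · exact Or.inr ⟨0, by change (⟨1, k⟩ : KV m) = ⟨1, _⟩; congr 1; exact Subsingleton.elim (α := Fin 1) _ _⟩
  · exact Or.inl ⟨Fin.succ (n := m) k, rfl⟩
  · exact Or.inr ⟨Fin.succ (n := m) k, rfl⟩

theorem lower (p m n : ℕ) (hm : 4 * p + 2 ≤ m) (H : Fin n → SimpleGraph (KV m))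
    (hp : ∀ i, IsPlanar (H i))
    (hs : (⨆ i, H i) = completeMultipartiteGraph ![Fin 1, Fin 1, Fin m, Fin m]) : p + 2 ≤ n := by
  have hle : 4 * p + 3 ≤ m + 1 := by omega
  have := lower_gen _ (4 * p + 3) n (by omega)
    (Sum.elim (fun i => vx m (Fin.castLE hle i)) (fun i => vy m (Fin.castLE hle i))) (by
      rintro (i | i) (j | j) h
      · simpa using vx_inj m h
      · exact absurd (congrArg Sigma.fst h) (vxy_ne m _ _)
      · exact absurd (congrArg Sigma.fst h).symm (vxy_ne m _ _)
      · simpa using vy_inj m h) (by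
      intro i j
      exact vxy_ne m _ _) H hp hs
  by_contra hc
  have h1 : n ≤ p + 1 := by omega
  have h2 : 4 * (4 * p + 3) - 4 = 16 * p + 8 := by omega
  rw [h2] at this
  nlinarith [Nat.mul_le_mul_right (16 * p + 8) h1]
end lower
end TK

namespace TK
section host

def hostG {W E : Type} (src tgt : E → W) : SimpleGraph W :=
  SimpleGraph.fromRel fun u v => ∃ h, src h = u ∧ tgt h = v

lemma planar_host {W E : Type} (src tgt : E → W) (f : W → ℝ × ℝ) (arc : E → ℝ → ℝ × ℝ)
    (hf : Function.Injective f) (hne : ∀ h, src h ≠ tgt h) (hc : ∀ h, Continuous (arc h))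
    (h0 : ∀ h, arc h 0 = f (src h)) (h1 : ∀ h, arc h 1 = f (tgt h))
    (hv : ∀ h t w, 0 < t → t < 1 → arc h t ≠ f w)
    (hi : ∀ h h' s t, 0 < s → s < 1 → 0 < t → t < 1 → arc h s = arc h' t → h = h' ∧ s = t) :
    IsPlanar (hostG src tgt) := by
  have key : ∀ e : (hostG src tgt).edgeSet, ∃ h, (e : Sym2 W) = s(src h, tgt h) := by
    rintro ⟨e, he⟩
    induction e with
    | _ u v =>
      rcases he.2 with ⟨h, rfl, rfl⟩ | ⟨h, rfl, rfl⟩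
      · exact ⟨h, rfl⟩
      · exact ⟨h, Sym2.eq_swap⟩
  choose η hη using key
  have tri : ∀ t : Set.Icc (0:ℝ) 1, t = ⟨0, by norm_num⟩ ∨ t = ⟨1, by norm_num⟩ ∨ (0 < (t:ℝ) ∧ (t:ℝ) < 1) := by
    rintro ⟨t, a, b⟩
    rcases a.eq_or_lt with h | h
    · left; exact Subtype.ext h.symm
    · rcases b.eq_or_lt with h' | h'
      · right; left; exact Subtype.ext h'
      · exact Or.inr (Or.inr ⟨h, h'⟩)
  refine ⟨f, fun e t => arc (η e) t, hf, fun e => (hc _).comp continuous_subtype_val,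
    fun e => ⟨src (η e), tgt (η e), hη e, h0 _, h1 _⟩, ?_, ?_, ?_⟩
  · intro e s t h
    have h : arc (η e) s = arc (η e) t := h
    rcases tri s with rfl | rfl | hs <;> rcases tri t with rfl | rfl | ht
    · rfl
    · exact absurd (hf ((h0 _).symm.trans (h.trans (h1 _)))) (hne _)
    · exact absurd (h.symm.trans (h0 _)) (hv _ _ _ ht.1 ht.2)
    · exact absurd (hf ((h0 _).symm.trans (h.symm.trans (h1 _)))) (hne _)
    · rfl
    · exact absurd (h.symm.trans (h1 _)) (hv _ _ _ ht.1 ht.2)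
    · exact absurd (h.trans (h0 _)) (hv _ _ _ hs.1 hs.2)
    · exact absurd (h.trans (h1 _)) (hv _ _ _ hs.1 hs.2)
    · exact Subtype.ext (hi _ _ _ _ hs.1 hs.2 ht.1 ht.2 h).2
  · intro e t a b v
    rcases tri t with rfl | rfl | ht
    · exact absurd rfl a
    · exact absurd rfl b
    · exact hv _ _ _ ht.1 ht.2
  · intro e e' hee s t h
    have h : arc (η e) s = arc (η e') t := h
    rcases tri s with rfl | rfl | hs
    · exact ⟨_, (h0 _).symm⟩
    · exact ⟨_, (h1 _).symm⟩
    · rcases tri t with rfl | rfl | ht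
      · exact absurd (h.trans (h0 _)) (hv _ _ _ hs.1 hs.2)
      · exact absurd (h.trans (h1 _)) (hv _ _ _ hs.1 hs.2)
      · exact absurd (Subtype.ext (by rw [hη e, hη e', (hi _ _ _ _ hs.1 hs.2 ht.1 ht.2 h).1])) hee

/-! second host -/
inductive E2
  | ab | ac (k : ℕ) | cd (k : ℕ) | db (k : ℕ) | dg (k : ℕ)

def src2 : E2 → Bool × ℕ
  | .ab => (true, 0)
  | .ac _ => (true, 0)
  | .cd k => (true, k + 1)
  | .db k => (false, k + 1)
  | .dg k => (false, k + 1)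
def tgt2 : E2 → Bool × ℕ
  | .ab => (false, 0)
  | .ac k => (true, k + 1)
  | .cd k => (false, k + 1)
  | .db _ => (false, 0)
  | .dg k => (true, k + 2)
def f2 : Bool × ℕ → ℝ × ℝ
  | (true, 0) => (0, 0)
  | (false, 0) => (0, 3)
  | (true, k + 1) => ((k : ℝ) + 1, 1)
  | (false, k + 1) => ((k : ℝ) + 1, 2)
def arc2 : E2 → ℝ → ℝ × ℝ
  | .ab, t => (0, 3 * t)
  | .ac k, t => (((k : ℝ) + 1) * t, t)
  | .cd k, t => ((k : ℝ) + 1, 1 + t)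
  | .db k, t => (((k : ℝ) + 1) * (1 - t), 2 + t)
  | .dg k, t => ((k : ℝ) + 1 + t, 2 - t)

lemma nat_sep {a b : ℕ} {s : ℝ} (h : (a : ℝ) = b + s) (h0 : 0 < s) (h1 : s < 1) : False := by
  have h2 : (b : ℝ) < a := by linarith
  have h3 : (a : ℝ) < b + 1 := by linarith
  have h2 : b < a := by exact_mod_cast h2
  have h3 : a < b + 1 := by exact_mod_cast h3
  omega

lemma nat_sep2 {a b : ℕ} {s t : ℝ} (h : (a : ℝ) + s = b + t) (h0 : 0 ≤ s) (h1 : s < 1)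
    (h2 : 0 ≤ t) (h3 : t < 1) : a = b ∧ s = t := by
  have h4 : a = b := by
    have h5 : (b : ℝ) < a + 1 := by linarith
    have h6 : (a : ℝ) < b + 1 := by linarith
    have h5 : b < a + 1 := by exact_mod_cast h5
    have h6 : a < b + 1 := by exact_mod_cast h6
    omega
  subst h4
  exact ⟨rfl, by linarith⟩

lemma planar2 : IsPlanar (hostG src2 tgt2) := by
  refine planar_host src2 tgt2 f2 arc2 ?_ ?_ ?_ ?_ ?_ ?_ ?_
  · rintro ⟨_ | _, _ | k⟩ ⟨_ | _, _ | l⟩ h <;> simp [f2] at h ⊢ <;> try norm_num at h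
    all_goals exact h
  · rintro (_ | k | k | k | k) <;> simp [src2, tgt2]
  · rintro (_ | k | k | k | k) <;> (unfold arc2; fun_prop)
  · rintro (_ | k | k | k | k) <;> simp [arc2, src2, f2]
  · rintro (_ | k | k | k | k) <;> simp [arc2, tgt2, f2] <;> norm_num <;> ring
  · rintro (_ | k | k | k | k) t ⟨_ | _, _ | l⟩ a b h <;>
      simp only [arc2, f2, Prod.mk.injEq] at h <;> obtain ⟨hx, hy⟩ := h <;>
      first
      | linarith
      | (have : (0:ℝ) ≤ k := Nat.cast_nonneg k
         nlinarith)
      | (have : (0:ℝ) ≤ l := Nat.cast_nonneg l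
         nlinarith)
  · rintro (_ | k | k | k | k) (_ | l | l | l | l) s t a b c d h <;>
      simp only [arc2, Prod.mk.injEq] at h <;> obtain ⟨hx, hy⟩ := h <;>
      first
      | (exfalso; linarith)
      | (exfalso
         have : (0:ℝ) ≤ k := Nat.cast_nonneg k
         nlinarith)
      | (exfalso
         have : (0:ℝ) ≤ l := Nat.cast_nonneg l
         nlinarith)
      | exact ⟨rfl, by linarith⟩
      | (have hst : s = t := by linarith
         subst hst
         have h2 : (k : ℝ) = l := by
           first
           | linarith
           | (have h3 := mul_right_cancel₀ (by linarith) hx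
              linarith)
         have h2 : k = l := by exact_mod_cast h2
         subst h2
         exact ⟨rfl, rfl⟩)
      | (exfalso; exact nat_sep (a := k) (b := l) (s := t) (by linarith) c d)
      | (exfalso; exact nat_sep (a := l) (b := k) (s := s) (by linarith) a b)
end host
end TK

namespace TK
section host1

noncomputable def Sd (x y : ℝ) : ℝ := (1 - |y|) * x + max y 0 * (⌊x + 1/4⌋ : ℤ) + max (-y) 0 * (⌊x⌋ : ℤ)

lemma Sd_cont (x : ℝ) : Continuous (Sd x) := by unfold Sd; fun_prop

lemma Sd_lt {x x' y : ℝ} (h : x < x') (hy : |y| < 1) : Sd x y < Sd x' y := by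
  unfold Sd
  have h1 : ((⌊x + 1/4⌋ : ℤ) : ℝ) ≤ (⌊x' + 1/4⌋ : ℤ) := by
    exact_mod_cast Int.floor_le_floor (by linarith)
  have h2 : ((⌊x⌋ : ℤ) : ℝ) ≤ (⌊x'⌋ : ℤ) := by
    exact_mod_cast Int.floor_le_floor (by linarith)
  have h3 := mul_le_mul_of_nonneg_left h1 (le_max_right y 0)
  have h4 := mul_le_mul_of_nonneg_left h2 (le_max_right (-y) 0)
  have h5 := mul_lt_mul_of_pos_left h (show 0 < 1 - |y| by linarith)
  linarith

lemma Sd_inj {x x' y : ℝ} (h0 : -1 < y) (h1 : y < 1) (h : Sd x y = Sd x' y) : x = x' := by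
  have hy : |y| < 1 := abs_lt.2 ⟨h0, h1⟩
  rcases lt_trichotomy x x' with h' | h' | h'
  · exact absurd h (Sd_lt h' hy).ne
  · exact h'
  · exact absurd h (Sd_lt h' hy).ne'

lemma Sd_zero (x : ℝ) : Sd x 0 = x := by simp [Sd]
lemma Sd_one (x : ℝ) : Sd x 1 = (⌊x + 1/4⌋ : ℤ) := by simp [Sd]
lemma Sd_neg (x : ℝ) : Sd x (-1) = (⌊x⌋ : ℤ) := by simp [Sd]

noncomputable def pb (n j : ℕ) : ℝ := n + 1 / ((j : ℝ) + 3)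

lemma pb_fr (j : ℕ) : 0 < 1 / ((j : ℝ) + 3) ∧ 1 / ((j : ℝ) + 3) ≤ 1 / 3 := by
  constructor
  · positivity
  · apply one_div_le_one_div_of_le (by norm_num)
    have : (0 : ℝ) ≤ j := Nat.cast_nonneg j
    linarith

lemma pb_inj {n j n' j' : ℕ} (h : pb n j = pb n' j') : n = n' ∧ j = j' := by
  have h1 := pb_fr j
  have h2 := pb_fr j'
  obtain ⟨a, b⟩ := nat_sep2 h h1.1.le (by linarith [h1.2]) h2.1.le (by linarith [h2.2])
  refine ⟨a, ?_⟩
  have h3 : (j : ℝ) + 3 = j' + 3 := inv_injective (by simpa [one_div] using b)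
  have : (j : ℝ) = j' := by linarith
  exact_mod_cast this

lemma pb_ne {n j n' : ℕ} (h : pb n j = n' + 3 / 4) : False := by
  have h1 := pb_fr j
  obtain ⟨a, b⟩ := nat_sep2 h h1.1.le (by linarith [h1.2]) (by norm_num) (by norm_num)
  linarith [h1.2]

lemma pb_top (n j : ℕ) : Sd (pb n j) 1 = n := by
  have h1 := pb_fr j
  rw [Sd_one]
  have : ⌊pb n j + 1/4⌋ = (n : ℤ) := by
    rw [Int.floor_eq_iff]; unfold pb; push_cast; constructor <;> linarith [h1.1, h1.2]
  rw [this]; simp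
lemma pb_bot (n j : ℕ) : Sd (pb n j) (-1) = n := by
  have h1 := pb_fr j
  rw [Sd_neg]
  have : ⌊pb n j⌋ = (n : ℤ) := by
    rw [Int.floor_eq_iff]; unfold pb; push_cast; constructor <;> linarith [h1.1, h1.2]
  rw [this]; simp
lemma cr_top (n : ℕ) : Sd (n + 3/4) 1 = n + 1 := by
  rw [Sd_one]
  have : ⌊(n : ℝ) + 3/4 + 1/4⌋ = (n : ℤ) + 1 := by
    rw [Int.floor_eq_iff]; push_cast; constructor <;> linarith
  rw [this]; simp
lemma cr_bot (n : ℕ) : Sd (n + 3/4) (-1) = n := by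
  rw [Sd_neg]
  have : ⌊(n : ℝ) + 3/4⌋ = (n : ℤ) := by
    rw [Int.floor_eq_iff]; push_cast; constructor <;> linarith
  rw [this]; simp

inductive W1
  | X (n : ℕ) | Y (n : ℕ) | P (n j : ℕ)
inductive E1
  | ct | cb | tp (n : ℕ) | bt (n : ℕ) | pu (n j : ℕ) | pd (n j : ℕ) | cr (n : ℕ)
def src1 : E1 → W1
  | .ct => .X 0
  | .cb => .Y 0
  | .tp n => .X n
  | .bt n => .Y n
  | .pu n j => .P n j
  | .pd n j => .P n j
  | .cr n => .X (n + 1)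
def tgt1 : E1 → W1
  | .ct => .X 3
  | .cb => .Y 3
  | .tp n => .X (n + 1)
  | .bt n => .Y (n + 1)
  | .pu n _ => .X n
  | .pd n _ => .Y n
  | .cr n => .Y n
noncomputable def f1 : W1 → ℝ × ℝ
  | .X n => (n, 1)
  | .Y n => (n, -1)
  | .P n j => (pb n j, 0)
noncomputable def arc1 : E1 → ℝ → ℝ × ℝ
  | .ct, t => (3 * t, 1 + t * (1 - t))
  | .cb, t => (3 * t, -1 - t * (1 - t))
  | .tp n, t => (n + t, 1)
  | .bt n, t => (n + t, -1)
  | .pu n j, t => (Sd (pb n j) t, t)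
  | .pd n j, t => (Sd (pb n j) (-t), -t)
  | .cr n, t => (Sd (n + 3/4) (1 - 2 * t), 1 - 2 * t)

lemma planar1 : IsPlanar (hostG src1 tgt1) := by
  have hS := Sd_cont
  refine planar_host src1 tgt1 f1 arc1 ?_ ?_ ?_ ?_ ?_ ?_ ?_
  · rintro (n | n | ⟨n, j⟩) (n' | n' | ⟨n', j'⟩) h <;> simp only [f1, Prod.mk.injEq] at h <;>
      obtain ⟨hx, hy⟩ := h
    · rw [Nat.cast_injective hx]
    · norm_num at hy
    · norm_num at hy
    · norm_num at hy
    · rw [Nat.cast_injective hx]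
    · norm_num at hy
    · norm_num at hy
    · norm_num at hy
    · obtain ⟨rfl, rfl⟩ := pb_inj hx; rfl
  · rintro (_ | _ | n | n | ⟨n, j⟩ | ⟨n, j⟩ | n) <;> simp [src1, tgt1]
  · rintro (_ | _ | n | n | ⟨n, j⟩ | ⟨n, j⟩ | n) <;> unfold arc1
    · fun_prop
    · fun_prop
    · fun_prop
    · fun_prop
    · exact (hS _).prodMk continuous_id
    · exact ((hS _).comp (by fun_prop)).prodMk (by fun_prop)
    · exact ((hS _).comp (by fun_prop)).prodMk (by fun_prop)
  · rintro (_ | _ | n | n | ⟨n, j⟩ | ⟨n, j⟩ | n) <;> simp [arc1, src1, f1, Sd_zero, cr_top]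
  · rintro (_ | _ | n | n | ⟨n, j⟩ | ⟨n, j⟩ | n) <;>
      simp [arc1, tgt1, f1, pb_top, pb_bot] <;> norm_num [cr_bot]
  · rintro (_ | _ | n | n | ⟨n, j⟩ | ⟨n, j⟩ | n) t (n' | n' | ⟨n', j'⟩) a b h <;>
      simp only [arc1, f1, Prod.mk.injEq] at h <;> obtain ⟨hx, hy⟩ := h <;>
      have q : 0 < t * (1 - t) := mul_pos a (by linarith) <;>
      first
      | linarith
      | exact nat_sep hx.symm a b
      | (rw [hy, Sd_zero] at hx; exact pb_ne hx.symm)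
  · rintro (_ | _ | n | n | ⟨n, j⟩ | ⟨n, j⟩ | n) (_ | _ | n' | n' | ⟨n', j'⟩ | ⟨n', j'⟩ | n') s t a b c d h <;>
      simp only [arc1, Prod.mk.injEq] at h <;> obtain ⟨hx, hy⟩ := h <;>
      have q : 0 < s * (1 - s) := mul_pos a (by linarith) <;>
      have q' : 0 < t * (1 - t) := mul_pos c (by linarith) <;>
      first
      | (exfalso; linarith)
      | exact ⟨rfl, by linarith⟩
      | (obtain ⟨h1, h2⟩ := nat_sep2 hx a.le b c.le d
         subst h1
         exact ⟨rfl, h2⟩)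
      | (rw [hy] at hx
         have h1 := Sd_inj (by linarith) (by linarith) hx
         first
         | exact (pb_ne h1).elim
         | exact (pb_ne h1.symm).elim
         | (obtain ⟨h2, h3⟩ := pb_inj h1
            subst h2 h3
            exact ⟨rfl, by linarith⟩)
         | (have h2 : (n : ℝ) = n' := by linarith
            have h2 : n = n' := by exact_mod_cast h2
            subst h2
            exact ⟨rfl, by linarith⟩))
end host1
end TK

namespace TK
section upper

def lev : Bool → ℕ → ℕ
  | true, 0 => 1 | true, 1 => 1 | true, _ => 3
  | false, 0 => 2 | false, 1 => 0 | false, 2 => 2 | false, _ => 0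
def isUpp : Bool → ℕ → Bool
  | true, 0 => true | true, 1 => false | true, 2 => false | true, _ => true
  | false, 0 => false | false, 1 => true | false, 2 => true | false, _ => false

def tab (b : Bool) (k : ℕ) : W1 := if isUpp b k then .X (lev b k) else .Y (lev b k)

def io (r : ℕ) (v : Bool × ℕ) : W1 :=
  if v.2 / 4 = r then tab v.1 (v.2 % 4) else .P ((lev v.1 (v.2 % 4) + 3) % 4) v.2

lemma lt4 (k : ℕ) : k % 4 = 0 ∨ k % 4 = 1 ∨ k % 4 = 2 ∨ k % 4 = 3 := by omega

lemma tab_inj (b b' : Bool) (k l : ℕ) (h : tab b (k % 4) = tab b' (l % 4)) :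
    b = b' ∧ k % 4 = l % 4 := by
  rcases lt4 k with hk | hk | hk | hk <;> rcases lt4 l with hl | hl | hl | hl <;> rw [hk, hl] at h ⊢ <;>
    cases b <;> cases b' <;> simp [tab, lev, isUpp] at h ⊢

lemma tab_ne (b : Bool) (k n j : ℕ) : tab b k ≠ .P n j := by
  unfold tab; split_ifs <;> simp

lemma lev_inj (b b' : Bool) (k : ℕ) (h : (lev b (k % 4) + 3) % 4 = (lev b' (k % 4) + 3) % 4) : b = b' := by
  rcases lt4 k with hk | hk | hk | hk <;> rw [hk] at h <;>
    cases b <;> cases b' <;> simp [lev] at h ⊢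

lemma io_inj (r : ℕ) : Function.Injective (io r) := by
  rintro ⟨b, k⟩ ⟨b', l⟩ h
  simp only [io] at h
  split_ifs at h with h1 h2 h2
  · obtain ⟨rfl, h3⟩ := tab_inj _ _ _ _ h
    have : k = l := by omega
    rw [this]
  · exact absurd h (tab_ne _ _ _ _)
  · exact absurd h.symm (tab_ne _ _ _ _)
  · simp only [W1.P.injEq] at h
    obtain ⟨h3, rfl⟩ := h
    rw [lev_inj _ _ _ h3]

def T (p : ℕ) (i : ℕ) : SimpleGraph (Bool × ℕ) :=
  if i < p + 1 then (hostG src1 tgt1).comap (io i) else hostG src2 tgt2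

lemma T_planar (p i : ℕ) : IsPlanar (T p i) := by
  unfold T
  split_ifs
  · exact planar_comap (io i) (io_inj i) (fun _ _ h => h) planar1
  · exact planar2

lemma host_mk {W E : Type} (src tgt : E → W) (hne : ∀ h, src h ≠ tgt h) (h : E) :
    (hostG src tgt).Adj (src h) (tgt h) := ⟨hne h, Or.inl ⟨h, rfl, rfl⟩⟩

lemma ne1 : ∀ h, src1 h ≠ tgt1 h := by
  rintro (_ | _ | n | n | ⟨n, j⟩ | ⟨n, j⟩ | n) <;> simp [src1, tgt1]
lemma ne2 : ∀ h, src2 h ≠ tgt2 h := by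
  rintro (_ | k | k | k | k) <;> simp [src2, tgt2]

lemma tab_adj (k l : ℕ) (h : k % 4 ≠ l % 4) (h' : ¬ (k % 4 = 2 ∧ l % 4 = 1)) :
    (hostG src1 tgt1).Adj (tab true (k % 4)) (tab false (l % 4)) := by
  rcases lt4 k with hk | hk | hk | hk <;> rcases lt4 l with hl | hl | hl | hl <;> rw [hk, hl] at h h' ⊢ <;>
    first
    | exact absurd rfl h
    | exact absurd ⟨rfl, rfl⟩ h'
    | exact host_mk src1 tgt1 ne1 .ct
    | exact (host_mk src1 tgt1 ne1 .ct).symm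
    | exact host_mk src1 tgt1 ne1 .cb
    | exact (host_mk src1 tgt1 ne1 .cb).symm
    | exact host_mk src1 tgt1 ne1 (.tp 0)
    | exact (host_mk src1 tgt1 ne1 (.tp 0)).symm
    | exact host_mk src1 tgt1 ne1 (.tp 1)
    | exact (host_mk src1 tgt1 ne1 (.tp 1)).symm
    | exact host_mk src1 tgt1 ne1 (.tp 2)
    | exact (host_mk src1 tgt1 ne1 (.tp 2)).symm
    | exact host_mk src1 tgt1 ne1 (.bt 0)
    | exact (host_mk src1 tgt1 ne1 (.bt 0)).symm
    | exact host_mk src1 tgt1 ne1 (.bt 1)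
    | exact (host_mk src1 tgt1 ne1 (.bt 1)).symm
    | exact host_mk src1 tgt1 ne1 (.bt 2)
    | exact (host_mk src1 tgt1 ne1 (.bt 2)).symm
    | exact host_mk src1 tgt1 ne1 (.cr 0)
    | exact (host_mk src1 tgt1 ne1 (.cr 0)).symm
    | exact host_mk src1 tgt1 ne1 (.cr 1)
    | exact (host_mk src1 tgt1 ne1 (.cr 1)).symm
    | exact host_mk src1 tgt1 ne1 (.cr 2)
    | exact (host_mk src1 tgt1 ne1 (.cr 2)).symm

lemma page_adj (b b' : Bool) (k l : ℕ) (h : (lev b (k % 4) + 3) % 4 = lev b' (l % 4))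
    (hkl : k / 4 ≠ l / 4) : (hostG src1 tgt1).Adj (io (l / 4) (b, k)) (io (l / 4) (b', l)) := by
  simp only [io, if_neg hkl, if_true]
  rw [h]
  unfold tab
  split_ifs
  · exact host_mk src1 tgt1 ne1 (.pu _ k)
  · exact host_mk src1 tgt1 ne1 (.pd _ k)

lemma lev_or (k l : ℕ) : (lev true (k % 4) + 3) % 4 = lev false (l % 4) ∨
    (lev false (l % 4) + 3) % 4 = lev true (k % 4) := by
  rcases lt4 k with hk | hk | hk | hk <;> rcases lt4 l with hl | hl | hl | hl <;> rw [hk, hl] <;> decide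

lemma T_one {p i : ℕ} (hi : i < p + 1) {u v} (h : (hostG src1 tgt1).Adj (io i u) (io i v)) :
    ∃ i : Fin (p + 2), (T p i).Adj u v :=
  ⟨⟨i, by omega⟩, by simp only [T, if_pos hi]; exact h⟩
lemma T_two {p : ℕ} {u v} (h : (hostG src2 tgt2).Adj u v) :
    ∃ i : Fin (p + 2), (T p i).Adj u v :=
  ⟨⟨p + 1, by omega⟩, by simp only [T, lt_irrefl, if_false]; exact h⟩

lemma T_cross (p k l : ℕ) (hk : k < 4 * (p + 1)) (hl : l < 4 * (p + 1)) :
    ∃ i : Fin (p + 2), (T p i).Adj (true, k) (false, l) := by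
  by_cases hkl : k / 4 = l / 4
  · by_cases h1 : k % 4 = l % 4
    · have : k = l := by omega
      subst this
      apply T_two
      rcases k with _ | k
      · exact host_mk src2 tgt2 ne2 .ab
      · exact host_mk src2 tgt2 ne2 (.cd k)
    · by_cases h2 : k % 4 = 2 ∧ l % 4 = 1
      · obtain ⟨j, rfl⟩ : ∃ j, l = j + 1 := ⟨l - 1, by omega⟩
        have : k = j + 2 := by omega
        subst this
        exact T_two (host_mk src2 tgt2 ne2 (.dg j)).symm
      · refine T_one (i := k / 4) (by omega) ?_
        simp only [io, hkl, if_true]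
        exact tab_adj k l h1 h2
  · rcases lev_or k l with h | h
    · exact T_one (i := l / 4) (by omega) (page_adj _ _ _ _ h hkl)
    · exact T_one (i := k / 4) (by omega) (page_adj _ _ _ _ h (Ne.symm hkl)).symm

lemma T_same (p : ℕ) (b : Bool) (k : ℕ) : ∃ i : Fin (p + 2), (T p i).Adj (b, 0) (b, k + 1) := by
  apply T_two
  cases b
  · exact (host_mk src2 tgt2 ne2 (.db k)).symm
  · exact host_mk src2 tgt2 ne2 (.ac k)

noncomputable def pos (m : ℕ) (v : KV m) : Bool × ℕ :=
  open Classical in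
  if h : ∃ i, v = vx m i then (true, (h.choose : ℕ)) else
  if h : ∃ i, v = vy m i then (false, (h.choose : ℕ)) else (true, 0)

lemma pos_x (m : ℕ) (i) : pos m (vx m i) = (true, (i : ℕ)) := by
  have h : ∃ j, vx m i = vx m j := ⟨i, rfl⟩
  unfold pos
  rw [dif_pos h, ← vx_inj m h.choose_spec]

lemma pos_y (m : ℕ) (i) : pos m (vy m i) = (false, (i : ℕ)) := by
  have h0 : ¬ ∃ j, vy m i = vx m j := fun ⟨j, h⟩ => vxy_ne m j i (by rw [h])
  have h : ∃ j, vy m i = vy m j := ⟨i, rfl⟩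
  unfold pos
  rw [dif_neg h0, dif_pos h, ← vy_inj m h.choose_spec]

lemma pos_inj (m : ℕ) : Function.Injective (pos m) := by
  intro u v h
  rcases v_cases m u with ⟨i, rfl⟩ | ⟨i, rfl⟩ <;> rcases v_cases m v with ⟨j, rfl⟩ | ⟨j, rfl⟩ <;>
    simp only [pos_x, pos_y, Prod.mk.injEq] at h
  · rw [Fin.ext h.2]
  · simp at h
  · simp at h
  · rw [Fin.ext h.2]

theorem upper (p m : ℕ) (hm : m ≤ 4 * p + 3) : ∃ H : Fin (p + 2) → SimpleGraph (KV m),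
    (∀ i, H i ≤ completeMultipartiteGraph ![Fin 1, Fin 1, Fin m, Fin m]) ∧ (∀ i, IsPlanar (H i)) ∧
    (⨆ i, H i) = completeMultipartiteGraph ![Fin 1, Fin 1, Fin m, Fin m] := by
  refine ⟨fun i => completeMultipartiteGraph ![Fin 1, Fin 1, Fin m, Fin m] ⊓ (T p i).comap (pos m),
    fun i => inf_le_left, fun i => planar_comap (pos m) (pos_inj m) (fun _ _ h => h.2) (T_planar p i), ?_⟩
  refine le_antisymm (iSup_le fun i => inf_le_left) ?_
  suffices key : ∀ u v : KV m, u.1 ≠ v.1 → ∃ i : Fin (p + 2), (T p i).Adj (pos m u) (pos m v) by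
    intro u v h
    obtain ⟨i, hi⟩ := key u v h
    rw [SimpleGraph.iSup_adj]
    exact ⟨i, h, hi⟩
  have same : ∀ (b : Bool) (i j : Fin (m + 1)), ¬ ((i = 0) ↔ (j = 0)) →
      ∃ r : Fin (p + 2), (T p r).Adj (b, (i : ℕ)) (b, (j : ℕ)) := by
    intro b i j
    refine Fin.cases ?_ (fun i => ?_) i <;> refine Fin.cases ?_ (fun j => ?_) j <;> intro h
    · exact absurd Iff.rfl h
    · exact T_same p b j
    · obtain ⟨r, hr⟩ := T_same p b i
      exact ⟨r, hr.symm⟩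
    · exact absurd (by simp) h
  intro u v h
  rcases v_cases m u with ⟨i, rfl⟩ | ⟨i, rfl⟩ <;> rcases v_cases m v with ⟨j, rfl⟩ | ⟨j, rfl⟩ <;>
    simp only [pos_x, pos_y]
  · refine same _ _ _ fun h1 => h ?_
    rw [← vx_zero m i, ← vx_zero m j] at h1
    rcases vx_col m i with h2 | h2
    · rw [h2, h1.1 h2]
    · rcases vx_col m j with h3 | h3
      · rw [h1.2 h3, h3]
      · rw [h2, h3]
  · exact T_cross p i j (by omega) (by omega)
  · obtain ⟨r, hr⟩ := T_cross p j i (by omega) (by omega)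
    exact ⟨r, hr.symm⟩
  · refine same _ _ _ fun h1 => h ?_
    rw [← vy_zero m i, ← vy_zero m j] at h1
    rcases vy_col m i with h2 | h2
    · rw [h2, h1.1 h2]
    · rcases vy_col m j with h3 | h3
      · rw [h1.2 h3, h3]
      · rw [h2, h3]
end upper
end TK

theorem thickness_K11_4p2_4p3 (p : ℕ) :
    thickness (completeMultipartiteGraph ![Fin 1, Fin 1, Fin (4 * p + 2), Fin (4 * p + 2)]) = p + 2 ∧
    thickness (completeMultipartiteGraph ![Fin 1, Fin 1, Fin (4 * p + 3), Fin (4 * p + 3)]) = p + 2 := by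
  constructor
  · have h := TK.upper p (4 * p + 2) (by omega)
    refine le_antisymm (Nat.sInf_le h) (le_csInf ⟨_, h⟩ ?_)
    rintro n ⟨H, -, hp, hs⟩
    exact TK.lower p _ n le_rfl H hp hs
  · have h := TK.upper p (4 * p + 3) le_rfl
    refine le_antisymm (Nat.sInf_le h) (le_csInf ⟨_, h⟩ ?_)
    rintro n ⟨H, -, hp, hs⟩
    exact TK.lower p _ n (by omega) H hp hs
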